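/- arXiv:0711.2856 — 3 statements merged into one kernel-verified Lean document; each statement's English description precedes it below -/
import Mathlib

section
/- Let X be a Banach space and Y a closed subspace of X. If X = Y ⊕ Z and X = Y ⊕ W are both L-decompositions of X (i.e., Z and W are closed subspaces with X = Y + Z, Y ∩ Z = {0}, and ‖y + z‖ = ‖y‖ + ‖z‖ for all y ∈ Y, z ∈ Z, and similarly for W), then Z = W. That is, a subspace can have only one L-complement. -/
section LComplement

variable {R X : Type*} [Ring R] [NormedAddCommGroup X] [Module R X] {Y Z W : Submodule R X}

theorem mem_L_complement_iff (hYZ : Codisjoint Y Z)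
    (hZ : ∀ y ∈ Y, ∀ z ∈ Z, ‖y + z‖ = ‖y‖ + ‖z‖) {x : X} :
    x ∈ Z ↔ ∀ y ∈ Y, ‖y + x‖ = ‖y‖ + ‖x‖ := by
  refine ⟨fun hx y hy ↦ hZ y hy x hx, fun hx ↦ ?_⟩
  obtain ⟨y, z, hy, hz, rfl⟩ := Submodule.codisjoint_iff_exists_add_eq.mp hYZ x
  have norm_z : ‖z‖ = ‖y‖ + (‖y‖ + ‖z‖) := calc
    ‖z‖ = ‖-y + (y + z)‖ := by rw [neg_add_cancel_left]
    _ = ‖-y‖ + ‖y + z‖ := hx (-y) (Y.neg_mem hy)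
    _ = ‖y‖ + (‖y‖ + ‖z‖) := by rw [norm_neg, hZ y hy z hz]
  have y_eq_zero : y = 0 := norm_eq_zero.mp (by linarith)
  rwa [y_eq_zero, zero_add]

theorem uniqueness_of_L_complement_general (hYZ : Codisjoint Y Z) (hYW : Codisjoint Y W)
    (hZ : ∀ y ∈ Y, ∀ z ∈ Z, ‖y + z‖ = ‖y‖ + ‖z‖)
    (hW : ∀ y ∈ Y, ∀ w ∈ W, ‖y + w‖ = ‖y‖ + ‖w‖) :
    Z = W :=
  Submodule.ext fun _ ↦ (mem_L_complement_iff hYZ hZ).trans (mem_L_complement_iff hYW hW).symm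

end LComplement

/-- **Uniqueness of L-complements.**
Let `X` be a Banach space and `Y` a closed subspace of `X`.  If `X = Y ⊕ Z` and
`X = Y ⊕ W` are both L-decompositions of `X` (i.e. `Z`, `W` are closed subspaces with
`X = Y + Z`, `Y ∩ Z = {0}`, and `‖y + z‖ = ‖y‖ + ‖z‖` for all `y ∈ Y`, `z ∈ Z`,
and similarly for `W`), then `Z = W`. -/
theorem uniqueness_of_L_complement
    {X : Type*} [NormedAddCommGroup X] [NormedSpace ℝ X] [CompleteSpace X]
    (Y Z W : Submodule ℝ X)
    (hYc : IsClosed (Y : Set X)) (hZc : IsClosed (Z : Set X)) (hWc : IsClosed (W : Set X))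
    (hYZsup : Y ⊔ Z = ⊤) (hYZinf : Y ⊓ Z = ⊥)
    (hYWsup : Y ⊔ W = ⊤) (hYWinf : Y ⊓ W = ⊥)
    (hZnorm : ∀ y ∈ Y, ∀ z ∈ Z, ‖y + z‖ = ‖y‖ + ‖z‖)
    (hWnorm : ∀ y ∈ Y, ∀ w ∈ W, ‖y + w‖ = ‖y‖ + ‖w‖) :
    Z = W :=
  uniqueness_of_L_complement_general (codisjoint_iff.mpr hYZsup) (codisjoint_iff.mpr hYWsup)
    hZnorm hWnorm
end

section
/- Let A be a C*-algebra, I a closed two-sided ideal of A, and n ≥ 1 a natural number. If b ∈ A/I satisfies b^n = 0 and ‖b‖ ≤ 1 (in the quotient norm), then there exists a ∈ A with a + I = b, a^n = 0, and ‖a‖ ≤ 1. That is, every nilpotent contraction in a quotient C*-algebra lifts to a nilpotent contraction. -/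
/-!
For each tuple `h` of self-adjoint elements, `triangular h a m` is strictly block triangular with
respect to a chain of functional-calculus cut-offs, and so nilpotent of order `m + 1` whatever `a`
is. If `a ^ (m + 1) = 0`, then at each stage of the chain the elements `p = upperCut z * a` and
`q = lowerCut z * a ^ (m - k)` satisfy `p * q = 0`; an `h k` that is a unit for `p⋆p` and kills
`qq⋆` then makes `triangular h a m = a`. Since `p⋆p` and `qq⋆` are the positive and negative parts
of `p⋆p - qq⋆`, approximate `h k` exist for every `a`, nilpotent or not, and *-homomorphisms
preserve them.

Passing to `ℓ^∞(A) / c₀(A)` shows that `triangular h a m` is uniformly close to `a` when `a` is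
close to a nilpotent. For a lift `a` of a nilpotent `b`, the nilpotent `triangular h a m` is close
to `a` and its image is arbitrarily close to `b`, so a small correction yields a better lift, and
iterating converges to a nilpotent lift.

The lift is made contractive by conjugating with the square root of `1 + ∑ (aᵏ)⋆ (a⋆a - 1)⁺ aᵏ`,
which lies over `1` because `‖b‖ ≤ 1`.
-/

namespace NilpotentLifting

section FunctionalCalculus

lemma mul_aeval_of_mul_eq_smul {R A : Type*} [CommSemiring R] [Semiring A] [Algebra R A]
    {x z : A} {r : R} (p : Polynomial R) (hx : x * z = r • x) :
    x * Polynomial.aeval z p = p.eval r • x := by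
  induction p using Polynomial.induction_on' with
  | add p q hp hq => rw [map_add, mul_add, hp, hq, Polynomial.eval_add, add_smul]
  | monomial k c =>
    have hpow : x * z ^ k = r ^ k • x := by
      induction k with
      | zero => simp only [pow_zero, mul_one, one_smul]
      | succ k ih => rw [pow_succ, ← mul_assoc, ih, smul_mul_assoc, hx, smul_smul, pow_succ]
    rw [Polynomial.aeval_monomial, ← Algebra.smul_def, mul_smul_comm, hpow,
      Polynomial.eval_monomial, smul_smul]

variable {A : Type*} [CStarAlgebra A] {x z : A} {r : ℝ} {f : ℝ → ℝ}

lemma mul_cfc_of_mul_eq_smul (hf : Continuous f) (hz : IsSelfAdjoint z) (hx : x * z = r • x) :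
    x * cfc f z = f r • x := by
  refine eq_of_forall_dist_le fun ε hε => ?_
  obtain ⟨M, hM⟩ := ((ContinuousFunctionalCalculus.isCompact_spectrum (R := ℝ) z).insert r
    ).isBounded.subset_closedBall 0
  set δ := ε / (2 * (‖x‖ + 1)) with hδ
  have hδ0 : 0 < δ := by positivity
  obtain ⟨p, hp⟩ := exists_polynomial_near_of_continuousOn (-M) M f hf.continuousOn δ hδ0
  have hnear : ∀ t ∈ insert r (spectrum ℝ z), |p.eval t - f t| ≤ δ := fun t ht =>
    (hp t (by simpa only [Real.closedBall_eq_Icc, zero_sub, zero_add] using hM ht)).le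
  have hcfc : ‖cfc f z - Polynomial.aeval z p‖ ≤ δ := by
    rw [← cfc_polynomial p z, ← cfc_sub f _ z]
    refine norm_cfc_le hδ0.le fun t ht => ?_
    rw [Real.norm_eq_abs, abs_sub_comm]
    exact hnear t (Set.mem_insert_of_mem r ht)
  calc dist (x * cfc f z) (f r • x)
      = ‖x * (cfc f z - Polynomial.aeval z p) + (p.eval r - f r) • x‖ := by
        rw [dist_eq_norm, mul_sub, mul_aeval_of_mul_eq_smul p hx, sub_smul, sub_add_sub_cancel]
    _ ≤ ‖x‖ * δ + δ * ‖x‖ := by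
        refine (norm_add_le _ _).trans (add_le_add ?_ ?_)
        · exact (norm_mul_le _ _).trans (by gcongr)
        · rw [norm_smul, Real.norm_eq_abs]
          gcongr
          exact hnear r (Set.mem_insert r _)
    _ = ε * (‖x‖ / (‖x‖ + 1)) := by rw [hδ]; field_simp; ring
    _ ≤ ε := mul_le_of_le_one_right hε.le (div_le_one_of_le₀ (by linarith) (by positivity))

lemma cfc_mul_of_mul_eq_smul (hf : Continuous f) (hz : IsSelfAdjoint z) (hx : z * x = r • x) :
    cfc f z * x = f r • x := by
  have hstar : star x * z = r • star x := by
    simpa only [star_mul, star_smul, hz.star_eq, star_trivial r] using congrArg star hx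
  have := congrArg star (mul_cfc_of_mul_eq_smul hf hz hstar)
  rwa [star_mul, star_smul, star_star, star_trivial (f r),
    (cfc_predicate f z : IsSelfAdjoint _).star_eq] at this

lemma cfc_mul_id (hf : Continuous f) (hz : IsSelfAdjoint z) :
    cfc (fun t => f t * t) z = cfc f z * z := by
  rw [cfc_mul f (fun t => t) z, cfc_id' ℝ z]

end FunctionalCalculus

section NormedRingQuotient

variable {R : Type*} [NormedRing R] (J : Ideal R) [J.IsTwoSided] [IsClosed (J : Set R)]

noncomputable instance quotientNormedRing : NormedRing (R ⧸ J) where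
  __ := Submodule.Quotient.normedAddCommGroup J
  __ := Ideal.Quotient.ring J
  norm_mul_le z w := by
    refine le_mul_of_forall_lt₀ fun r hr t ht => ?_
    obtain ⟨x, rfl, hx⟩ := Submodule.Quotient.norm_mk_lt z (sub_pos.2 hr)
    obtain ⟨y, rfl, hy⟩ := Submodule.Quotient.norm_mk_lt w (sub_pos.2 ht)
    rw [add_sub_cancel] at hx hy
    calc ‖Ideal.Quotient.mk J (x * y)‖ ≤ ‖x * y‖ := Submodule.Quotient.norm_mk_le J _
      _ ≤ ‖x‖ * ‖y‖ := norm_mul_le x y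
      _ ≤ r * t := mul_le_mul hx.le hy.le (norm_nonneg y) ((norm_nonneg x).trans hx.le)

noncomputable instance quotientNormedAlgebra (𝕜 : Type*) [NormedField 𝕜] [NormedAlgebra 𝕜 R] :
    NormedAlgebra 𝕜 (R ⧸ J) where
  __ := Submodule.Quotient.normedSpace J 𝕜
  __ := Ideal.Quotient.algebra 𝕜

end NormedRingQuotient

section CStarQuotient

variable {A : Type*} [CStarAlgebra A]

lemma norm_mul_one_sub_sq (y : A) {g : A} (hg : IsSelfAdjoint g) :
    ‖y * (1 - g)‖ ^ 2 = ‖(1 - g) * (star y * y) * (1 - g)‖ := by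
  rw [sq, ← CStarRing.norm_star_mul_self, star_mul, star_sub, star_one, hg.star_eq]
  simp only [mul_assoc]

lemma exists_continuous_abs_one_sub_mul_le {r : ℝ} (hr : 0 < r) :
    ∃ u : ℝ → ℝ, Continuous u ∧ ∀ t, |1 - u t * t| ≤ 1 ∧ |(1 - u t * t) * t| ≤ r := by
  have hpos : ∀ t : ℝ, 0 < r ^ 2 + t ^ 2 := fun t => by positivity
  refine ⟨fun t => t / (r ^ 2 + t ^ 2),
    continuous_id.div₀ (by fun_prop) fun t => (hpos t).ne', fun t => ?_⟩
  have hcut : 1 - t / (r ^ 2 + t ^ 2) * t = r ^ 2 / (r ^ 2 + t ^ 2) := by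
    have := (hpos t).ne'
    field_simp
    ring
  rw [hcut, abs_mul, abs_of_nonneg (by positivity), div_mul_eq_mul_div, div_le_one (hpos t),
    div_le_iff₀ (hpos t)]
  constructor
  · linarith [sq_nonneg t]
  · nlinarith [sq_nonneg (r - |t|), sq_abs t, abs_nonneg t]

lemma exists_mem_norm_mul_one_sub_le {J : Ideal A} {y : A} (hy : y ∈ J) {ε : ℝ} (hε : 0 < ε) :
    ∃ g ∈ J, IsSelfAdjoint g ∧ ‖1 - g‖ ≤ 1 ∧ ‖y * (1 - g)‖ ≤ ε := by
  have hsa : IsSelfAdjoint (star y * y) := .star_mul_self y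
  obtain ⟨u, hu, hu_le⟩ := exists_continuous_abs_one_sub_mul_le (sq_pos_of_pos hε)
  have hcompl : cfc (fun t => 1 - u t * t) (star y * y) =
      1 - cfc u (star y * y) * (star y * y) := by
    rw [cfc_sub (fun _ => 1) (fun t => u t * t) (star y * y), cfc_const_one ℝ _, cfc_mul_id hu hsa]
  set k := cfc (fun t => 1 - u t * t) (star y * y)
  have hk : ‖k‖ ≤ 1 := norm_cfc_le zero_le_one fun t _ => (hu_le t).1
  have hk_mul : ‖k * (star y * y)‖ ≤ ε ^ 2 := by
    rw [← cfc_mul_id (by fun_prop) hsa]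
    exact norm_cfc_le (sq_nonneg ε) fun t _ => (hu_le t).2
  have hksa : IsSelfAdjoint (1 - k) := (IsSelfAdjoint.one A).sub (cfc_predicate _ _)
  refine ⟨1 - k, ?_, hksa, by rwa [sub_sub_cancel], le_of_sq_le_sq ?_ hε.le⟩
  · rw [hcompl, sub_sub_cancel, ← mul_assoc]
    exact J.mul_mem_left _ hy
  · calc ‖y * (1 - (1 - k))‖ ^ 2 = ‖k * (star y * y) * k‖ := by
          rw [norm_mul_one_sub_sq y hksa, sub_sub_cancel]
      _ ≤ ε ^ 2 * 1 := (norm_mul_le _ _).trans (by gcongr)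
      _ = ε ^ 2 := mul_one _

variable (J : Ideal A) [J.IsTwoSided] [IsClosed (J : Set A)]

variable {J} in
lemma star_mem_of_isClosed {x : A} (hx : x ∈ J) : star x ∈ J := by
  have : star x ∈ closure (J : Set A) := by
    refine Metric.mem_closure_iff.2 fun ε hε => ?_
    obtain ⟨g, hgJ, hg, -, hxg⟩ := exists_mem_norm_mul_one_sub_le hx (half_pos hε)
    refine ⟨g * star x, J.mul_mem_right _ hgJ, ?_⟩
    have hstar : star x - g * star x = star (x * (1 - g)) := by
      rw [star_mul, star_sub, star_one, hg.star_eq, sub_mul, one_mul]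
    rw [dist_eq_norm, hstar, norm_star]
    linarith
  rwa [IsClosed.closure_eq ‹_›] at this

lemma norm_mk_mul_self_le (x : A) :
    ‖Ideal.Quotient.mk J x‖ * ‖Ideal.Quotient.mk J x‖ ≤ ‖Ideal.Quotient.mk J (star x * x)‖ := by
  refine le_of_forall_pos_le_add fun ε hε => ?_
  obtain ⟨v, hv, hv_lt⟩ :=
    Submodule.Quotient.norm_mk_lt (Ideal.Quotient.mk J (star x * x)) (half_pos hε)
  have hvJ : star x * x - v ∈ J := Ideal.Quotient.eq.1 hv.symm
  obtain ⟨g, hgJ, hg, hg_le, hvg⟩ := exists_mem_norm_mul_one_sub_le hvJ (half_pos hε)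
  have hmk : Ideal.Quotient.mk J x = Ideal.Quotient.mk J (x * (1 - g)) := by
    refine Ideal.Quotient.eq.2 ?_
    rw [mul_sub, mul_one, sub_sub_cancel]
    exact J.mul_mem_left x hgJ
  calc ‖Ideal.Quotient.mk J x‖ * ‖Ideal.Quotient.mk J x‖
      = ‖Ideal.Quotient.mk J (x * (1 - g))‖ ^ 2 := by rw [← hmk, sq]
    _ ≤ ‖x * (1 - g)‖ ^ 2 := by gcongr; exact Submodule.Quotient.norm_mk_le J _
    _ = ‖(1 - g) * v * (1 - g) + (1 - g) * ((star x * x - v) * (1 - g))‖ := by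
        rw [norm_mul_one_sub_sq x hg]
        congr 1
        noncomm_ring
    _ ≤ ‖1 - g‖ * ‖v‖ * ‖1 - g‖ + ‖1 - g‖ * ‖(star x * x - v) * (1 - g)‖ :=
        norm_add_le_of_le ((norm_mul_le _ _).trans (by gcongr; exact norm_mul_le _ _))
          (norm_mul_le _ _)
    _ ≤ 1 * ‖v‖ * 1 + 1 * (ε / 2) := by gcongr
    _ ≤ _ := by linarith

noncomputable instance quotientStarRing : StarRing (A ⧸ J) where
  star := Quotient.map' (s₁ := J.quotientRel) (s₂ := J.quotientRel) star fun x y h => by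
    rw [Submodule.quotientRel_def] at h ⊢
    rw [← star_sub]
    exact star_mem_of_isClosed h
  star_involutive z := by
    obtain ⟨x, rfl⟩ := Ideal.Quotient.mk_surjective z
    exact congrArg (Ideal.Quotient.mk J) (star_star x)
  star_mul z w := by
    obtain ⟨x, rfl⟩ := Ideal.Quotient.mk_surjective z
    obtain ⟨y, rfl⟩ := Ideal.Quotient.mk_surjective w
    exact congrArg (Ideal.Quotient.mk J) (star_mul x y)
  star_add z w := by
    obtain ⟨x, rfl⟩ := Ideal.Quotient.mk_surjective z
    obtain ⟨y, rfl⟩ := Ideal.Quotient.mk_surjective w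
    exact congrArg (Ideal.Quotient.mk J) (star_add x y)

noncomputable instance quotientCStarAlgebra : CStarAlgebra (A ⧸ J) where
  toCompleteSpace := Submodule.Quotient.completeSpace J
  norm_mul_self_le z := by
    obtain ⟨x, rfl⟩ := Ideal.Quotient.mk_surjective z
    exact norm_mk_mul_self_le J x
  star_smul c z := by
    obtain ⟨x, rfl⟩ := Ideal.Quotient.mk_surjective z
    exact congrArg (Ideal.Quotient.mk J) (star_smul c x)

/-- The quotient map `A → A ⧸ J` of a C*-algebra by a closed two-sided ideal, as a
*-homomorphism. -/
noncomputable def quotientStarAlgHom : A →⋆ₐ[ℂ] A ⧸ J where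
  __ := Ideal.Quotient.mkₐ ℂ J
  map_star' _ := rfl

end CStarQuotient

section TriangularModel

open Finset
open scoped CStarAlgebra

variable {A B : Type*} [CStarAlgebra A] [CStarAlgebra B]

/-- A spectral cut-off of `z` that is `1` on `[1/2, ∞)` and vanishes at `0`; it acts as a unit on
`lowerCut z`. -/
noncomputable def upperCut (z : A) : A := cfc (fun t : ℝ => min (2 * t) 1) z

/-- A spectral cut-off of `z` that vanishes on `(-∞, 1/2]` and is `1` at `1`. -/
noncomputable def lowerCut (z : A) : A := cfc (fun t : ℝ => max (2 * t - 1) 0) z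

variable {x z : A}

lemma isSelfAdjoint_upperCut (z : A) : IsSelfAdjoint (upperCut z) := cfc_predicate _ z

lemma isSelfAdjoint_lowerCut (z : A) : IsSelfAdjoint (lowerCut z) := cfc_predicate _ z

lemma upperCut_mul_lowerCut (z : A) : upperCut z * lowerCut z = lowerCut z := by
  rw [upperCut, lowerCut, ← cfc_mul _ _ z]
  congr 1
  ext t
  rcases le_total (2 * t) 1 with ht | ht
  · rw [max_eq_right (by linarith), mul_zero]
  · rw [min_eq_right ht, one_mul]

lemma map_upperCut (φ : A →⋆ₐ[ℂ] B) (hz : IsSelfAdjoint z) : φ (upperCut z) = upperCut (φ z) :=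
  StarAlgHom.map_cfc (R := ℝ) φ _ z (by fun_prop) (map_continuous φ) hz (hz.map φ)

lemma map_lowerCut (φ : A →⋆ₐ[ℂ] B) (hz : IsSelfAdjoint z) : φ (lowerCut z) = lowerCut (φ z) :=
  StarAlgHom.map_cfc (R := ℝ) φ _ z (by fun_prop) (map_continuous φ) hz (hz.map φ)

lemma upperCut_mul_eq_zero (hz : IsSelfAdjoint z) (hx : z * x = 0) : upperCut z * x = 0 := by
  simpa [upperCut] using cfc_mul_of_mul_eq_smul (f := fun t => min (2 * t) 1) (r := 0)
    (by fun_prop) hz (by rwa [zero_smul])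

lemma upperCut_mul_eq_self (hz : IsSelfAdjoint z) (hx : z * x = x) : upperCut z * x = x := by
  simpa [upperCut] using cfc_mul_of_mul_eq_smul (f := fun t => min (2 * t) 1) (r := 1)
    (by fun_prop) hz (by rwa [one_smul])

lemma mul_lowerCut_eq_zero (hz : IsSelfAdjoint z) (hx : x * z = 0) : x * lowerCut z = 0 := by
  simpa [lowerCut] using mul_cfc_of_mul_eq_smul (f := fun t => max (2 * t - 1) 0) (r := 0)
    (by fun_prop) hz (by rwa [zero_smul])

lemma mul_lowerCut_eq_self (hz : IsSelfAdjoint z) (hx : x * z = x) : x * lowerCut z = x := by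
  have hone : max (2 * 1 - 1) 0 = (1 : ℝ) := by norm_num
  simpa only [lowerCut, hone, one_smul] using mul_cfc_of_mul_eq_smul
    (f := fun t => max (2 * t - 1) 0) (r := 1) (by fun_prop) hz (by rwa [one_smul])

/-- The chain `z₀ = 1`, `zₖ₊₁ = lowerCut zₖ * hₖ * lowerCut zₖ`. It stands in for a descending flag
of projections: `upperCut zⱼ` is a unit for `lowerCut zᵢ` whenever `j ≤ i`. -/
noncomputable def chain (h : ℕ → A) : ℕ → A
  | 0 => 1
  | k + 1 => lowerCut (chain h k) * h k * lowerCut (chain h k)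

/-- The part of `a` that is strictly block triangular along the chain of `h`. It is nilpotent of
order `m + 1` for every self-adjoint `h`. -/
noncomputable def triangular (h : ℕ → A) (a : A) (m : ℕ) : A :=
  ∑ k ∈ range m, (upperCut (chain h k) - upperCut (chain h (k + 1))) * a *
    lowerCut (chain h (k + 1))

variable {h : ℕ → A}

@[simp]
lemma upperCut_chain_zero (h : ℕ → A) : upperCut (chain h 0) = 1 :=
  (mul_one _).symm.trans (upperCut_mul_eq_self (.one A) (one_mul 1))

@[simp]
lemma lowerCut_chain_zero (h : ℕ → A) : lowerCut (chain h 0) = 1 :=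
  (one_mul _).symm.trans (mul_lowerCut_eq_self (.one A) (one_mul 1))

lemma isSelfAdjoint_chain (hh : ∀ k, IsSelfAdjoint (h k)) : ∀ k, IsSelfAdjoint (chain h k)
  | 0 => .one A
  | k + 1 => by
    simpa only [chain, (isSelfAdjoint_lowerCut _).star_eq] using
      (hh k).conjugate (lowerCut (chain h k))

lemma upperCut_chain_mul_lowerCut_chain (hh : ∀ k, IsSelfAdjoint (h k)) {j i : ℕ} (hji : j ≤ i) :
    upperCut (chain h j) * lowerCut (chain h i) = lowerCut (chain h i) := by
  induction i, hji using Nat.le_induction with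
  | base => exact upperCut_mul_lowerCut _
  | succ i _ ih =>
    have hchain : (1 - upperCut (chain h j)) * chain h (i + 1) = 0 := by
      rw [chain, ← mul_assoc, ← mul_assoc, sub_mul, ih, one_mul, sub_self, zero_mul, zero_mul]
    have := mul_lowerCut_eq_zero (isSelfAdjoint_chain hh (i + 1)) hchain
    rwa [sub_mul, one_mul, sub_eq_zero, eq_comm] at this

lemma lowerCut_chain_mul_upperCut_chain (hh : ∀ k, IsSelfAdjoint (h k)) {j i : ℕ} (hji : j ≤ i) :
    lowerCut (chain h i) * upperCut (chain h j) = lowerCut (chain h i) := by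
  simpa only [star_mul, (isSelfAdjoint_upperCut _).star_eq, (isSelfAdjoint_lowerCut _).star_eq]
    using congrArg star (upperCut_chain_mul_lowerCut_chain hh hji)

lemma upperCut_chain_succ_mul_upperCut_chain (hh : ∀ k, IsSelfAdjoint (h k)) (k : ℕ) :
    upperCut (chain h (k + 1)) * upperCut (chain h k) = upperCut (chain h (k + 1)) := by
  have hchain : chain h (k + 1) * (1 - upperCut (chain h k)) = 0 := by
    rw [chain, mul_assoc, mul_sub, mul_one, lowerCut_chain_mul_upperCut_chain hh le_rfl, sub_self,
      mul_zero]
  have := upperCut_mul_eq_zero (isSelfAdjoint_chain hh (k + 1)) hchain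
  rwa [mul_sub, mul_one, sub_eq_zero, eq_comm] at this

lemma lowerCut_chain_mul_triangular_pow (hh : ∀ k, IsSelfAdjoint (h k)) (a : A) {m i d : ℕ}
    (hd : 1 ≤ d) (hid : m + 1 ≤ i + d) : lowerCut (chain h i) * triangular h a m ^ d = 0 := by
  induction d generalizing i with
  | zero => omega
  | succ d ih =>
    rw [pow_succ', ← mul_assoc, triangular, mul_sum, sum_mul, ← triangular]
    refine sum_eq_zero fun k hk => ?_
    rw [mem_range] at hk
    rcases lt_or_ge k i with hki | hki
    · rw [← mul_assoc, ← mul_assoc, mul_sub, lowerCut_chain_mul_upperCut_chain hh hki.le,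
        lowerCut_chain_mul_upperCut_chain hh hki, sub_self]
      simp only [zero_mul]
    · rw [mul_assoc, mul_assoc, ih (by omega) (by omega), mul_zero, mul_zero]

lemma triangular_pow (hh : ∀ k, IsSelfAdjoint (h k)) (a : A) (m : ℕ) :
    triangular h a m ^ (m + 1) = 0 := by
  simpa only [lowerCut_chain_zero, one_mul] using
    lowerCut_chain_mul_triangular_pow hh a (i := 0) (m.succ_pos) (zero_add (m + 1)).ge

lemma map_chain (φ : A →⋆ₐ[ℂ] B) (hh : ∀ k, IsSelfAdjoint (h k)) (k : ℕ) :
    φ (chain h k) = chain (φ ∘ h) k := by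
  induction k with
  | zero => exact map_one φ
  | succ k ih =>
    rw [chain, map_mul, map_mul, map_lowerCut φ (isSelfAdjoint_chain hh k), ih, chain,
      Function.comp_apply]

lemma map_triangular (φ : A →⋆ₐ[ℂ] B) (hh : ∀ k, IsSelfAdjoint (h k)) (a : A) (m : ℕ) :
    φ (triangular h a m) = triangular (φ ∘ h) (φ a) m := by
  simp only [triangular, map_sum, map_mul, map_sub, map_upperCut φ (isSelfAdjoint_chain hh _),
    map_lowerCut φ (isSelfAdjoint_chain hh _), map_chain φ hh]

end TriangularModel

section Splitting

open scoped CStarAlgebra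

attribute [local instance] CStarAlgebra.spectralOrder CStarAlgebra.spectralOrderedRing

variable {A B : Type*} [CStarAlgebra A] [CStarAlgebra B]

/-- With `p = upperCut z * a` and `q = lowerCut z * a ^ j`, the difference `p⋆p - qq⋆`. When
`p * q = 0` its positive and negative parts are `p⋆p` and `qq⋆`; unlike these two products, the
positive and negative parts are orthogonal for every `a`. -/
noncomputable def defect (z a : A) (j : ℕ) : A :=
  star (upperCut z * a) * (upperCut z * a) -
    lowerCut z * a ^ j * star (lowerCut z * a ^ j)

/-- `h` separates, up to `η`, the positive and negative parts of the defects of `a` along its own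
chain: `h k` kills the negative part exactly and is a unit for the positive part up to `η`. The
exponent `m - k` is meaningful for `k ≤ m` only. -/
structure IsSplitting (η : ℝ) (a : A) (m : ℕ) (h : ℕ → A) : Prop where
  isSelfAdjoint (k : ℕ) : IsSelfAdjoint (h k)
  norm_one_sub_le (k : ℕ) : ‖1 - h k‖ ≤ 1
  mul_negPart (k : ℕ) : h k * (defect (chain h k) a (m - k))⁻ = 0
  norm_posPart_mul_le (k : ℕ) : ‖(defect (chain h k) a (m - k))⁺ * (1 - h k)‖ ≤ η

lemma isSelfAdjoint_defect (z a : A) (j : ℕ) : IsSelfAdjoint (defect z a j) :=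
  (IsSelfAdjoint.star_mul_self _).sub (.mul_star_self _)

lemma map_defect (φ : A →⋆ₐ[ℂ] B) {z : A} (hz : IsSelfAdjoint z) (a : A) (j : ℕ) :
    φ (defect z a j) = defect (φ z) (φ a) j := by
  simp only [defect, map_sub, map_mul, map_star, map_pow, map_upperCut φ hz, map_lowerCut φ hz]

lemma exists_norm_posPart_mul_one_sub_le (w : A) {η : ℝ} (hη : 0 < η) :
    ∃ e, IsSelfAdjoint e ∧ ‖1 - e‖ ≤ 1 ∧ e * w⁻ = 0 ∧ ‖w⁺ * (1 - e)‖ ≤ η := by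
  have hmem : w⁺ ∈ Ideal.torsionOf A A w⁻ := CFC.posPart_mul_negPart w
  obtain ⟨e, he, hsa, hle, hη⟩ := exists_mem_norm_mul_one_sub_le hmem hη
  exact ⟨e, hsa, hle, he, hη⟩

lemma exists_isSplitting {η : ℝ} (hη : 0 < η) (a : A) (m : ℕ) : ∃ h, IsSplitting η a m h := by
  choose e he using fun w : A => exists_norm_posPart_mul_one_sub_le w hη
  let c : ℕ → A := Nat.rec 1 fun k z => lowerCut z * e (defect z a (m - k)) * lowerCut z
  have hc : ∀ k, chain (fun k => e (defect (c k) a (m - k))) k = c k := fun k => by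
    induction k with
    | zero => rfl
    | succ k ih => rw [chain, ih]
  refine ⟨fun k => e (defect (c k) a (m - k)), fun k => (he _).1, fun k => (he _).2.1, ?_, ?_⟩
  · intro k
    rw [hc]
    exact (he _).2.2.1
  · intro k
    rw [hc]
    exact (he _).2.2.2

lemma map_posPart (φ : A →⋆ₐ[ℂ] B) {w : A} (hw : IsSelfAdjoint w) : φ w⁺ = (φ w)⁺ := by
  rw [CFC.posPart_def, CFC.posPart_def]
  exact NonUnitalStarAlgHomClass.map_cfcₙ (R := ℝ) (S := ℂ) φ _ w (by fun_prop) (by simp)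
    (map_continuous φ) hw (hw.map φ)

lemma map_negPart (φ : A →⋆ₐ[ℂ] B) {w : A} (hw : IsSelfAdjoint w) : φ w⁻ = (φ w)⁻ := by
  rw [← CFC.posPart_neg, map_posPart φ hw.neg, map_neg, CFC.posPart_neg]

variable {a : A} {m : ℕ} {h : ℕ → A} {η : ℝ}

lemma IsSplitting.mono {η' : ℝ} (hs : IsSplitting η a m h) (hη : η ≤ η') : IsSplitting η' a m h :=
  { hs with norm_posPart_mul_le := fun k => (hs.norm_posPart_mul_le k).trans hη }

lemma map_defect_chain (φ : A →⋆ₐ[ℂ] B) (hh : ∀ k, IsSelfAdjoint (h k)) (a : A) (j k : ℕ) :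
    φ (defect (chain h k) a j) = defect (chain (φ ∘ h) k) (φ a) j := by
  rw [map_defect φ (isSelfAdjoint_chain hh k), map_chain φ hh]

lemma map_mul_negPart_defect (φ : A →⋆ₐ[ℂ] B) (hh : ∀ k, IsSelfAdjoint (h k)) (a : A) (j k : ℕ) :
    φ (h k * (defect (chain h k) a j)⁻) =
      (φ ∘ h) k * (defect (chain (φ ∘ h) k) (φ a) j)⁻ := by
  rw [map_mul, map_negPart φ (isSelfAdjoint_defect _ _ _), map_defect_chain φ hh,
    Function.comp_apply]

lemma map_posPart_defect_mul (φ : A →⋆ₐ[ℂ] B) (hh : ∀ k, IsSelfAdjoint (h k)) (a : A) (j k : ℕ) :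
    φ ((defect (chain h k) a j)⁺ * (1 - h k)) =
      (defect (chain (φ ∘ h) k) (φ a) j)⁺ * (1 - (φ ∘ h) k) := by
  rw [map_mul, map_posPart φ (isSelfAdjoint_defect _ _ _), map_defect_chain φ hh, map_sub, map_one,
    Function.comp_apply]

lemma IsSplitting.map (hs : IsSplitting η a m h) (φ : A →⋆ₐ[ℂ] B) :
    IsSplitting η (φ a) m (φ ∘ h) where
  isSelfAdjoint k := (hs.isSelfAdjoint k).map φ
  norm_one_sub_le k := by
    rw [Function.comp_apply, ← map_one φ, ← map_sub]
    exact (NonUnitalStarAlgHom.norm_apply_le φ _).trans (hs.norm_one_sub_le k)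
  mul_negPart k := by rw [← map_mul_negPart_defect φ hs.isSelfAdjoint, hs.mul_negPart, map_zero]
  norm_posPart_mul_le k := by
    rw [← map_posPart_defect_mul φ hs.isSelfAdjoint]
    exact (NonUnitalStarAlgHom.norm_apply_le φ _).trans (hs.norm_posPart_mul_le k)

lemma posPart_negPart_sub_of_mul_eq_zero {p q : A} (hpq : p * q = 0) :
    (star p * p - q * star q)⁺ = star p * p ∧ (star p * p - q * star q)⁻ = q * star q := by
  have hmul : star p * p * (q * star q) = 0 := by
    rw [mul_assoc, ← mul_assoc p, hpq, zero_mul, mul_zero]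
  exact CFC.posPart_negPart_unique rfl hmul (star_mul_self_nonneg p) (mul_star_self_nonneg q)

lemma mul_eq_self_of_posPart {p q e : A} (hpq : p * q = 0)
    (he : (star p * p - q * star q)⁺ * (1 - e) = 0) : p * e = p := by
  rw [(posPart_negPart_sub_of_mul_eq_zero hpq).1] at he
  have : star (p * (1 - e)) * (p * (1 - e)) = 0 := by
    rw [star_mul, mul_assoc, ← mul_assoc (star p), he, mul_zero]
  rw [CStarRing.star_mul_self_eq_zero_iff, mul_sub, mul_one, sub_eq_zero] at this
  exact this.symm

lemma mul_eq_zero_of_negPart {p q e : A} (hpq : p * q = 0)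
    (he : e * (star p * p - q * star q)⁻ = 0) : e * q = 0 := by
  rw [(posPart_negPart_sub_of_mul_eq_zero hpq).2] at he
  rw [← CStarRing.mul_star_self_eq_zero_iff, star_mul, ← mul_assoc, mul_assoc e, he, zero_mul]

lemma IsSplitting.succ (hs : IsSplitting 0 a m h) {k : ℕ}
    (hnil : upperCut (chain h k) * a ^ (m - k + 1) = 0)
    (hfix : upperCut (chain h k) * a * lowerCut (chain h k) = upperCut (chain h k) * a) :
    upperCut (chain h k) * a * lowerCut (chain h (k + 1)) = upperCut (chain h k) * a ∧
      upperCut (chain h (k + 1)) * a ^ (m - k) = 0 := by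
  have hpq : upperCut (chain h k) * a * (lowerCut (chain h k) * a ^ (m - k)) = 0 := by
    rw [← mul_assoc, hfix, mul_assoc, ← pow_succ', hnil]
  have hp := mul_eq_self_of_posPart hpq (norm_le_zero_iff.1 (hs.norm_posPart_mul_le k))
  have hq := mul_eq_zero_of_negPart hpq (hs.mul_negPart k)
  have hsa := isSelfAdjoint_chain hs.isSelfAdjoint (k + 1)
  refine ⟨mul_lowerCut_eq_self hsa ?_, upperCut_mul_eq_zero hsa ?_⟩
  · rw [chain, ← mul_assoc, ← mul_assoc, hfix, hp, hfix]
  · rw [chain, mul_assoc, mul_assoc, hq, mul_zero]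

lemma IsSplitting.upperCut_mul_pow (hs : IsSplitting 0 a m h) (ha : a ^ (m + 1) = 0) {k : ℕ}
    (hk : k ≤ m) : upperCut (chain h k) * a ^ (m - k + 1) = 0 ∧
      upperCut (chain h k) * a * lowerCut (chain h k) = upperCut (chain h k) * a := by
  induction k with
  | zero =>
    simp only [upperCut_chain_zero, lowerCut_chain_zero, one_mul, mul_one, Nat.sub_zero, ha,
      and_self]
  | succ k ih =>
    obtain ⟨hnil, hfix⟩ := ih (Nat.le_of_succ_le hk)
    obtain ⟨hfix', hnil'⟩ := hs.succ hnil hfix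
    refine ⟨by rwa [show m - (k + 1) + 1 = m - k by omega], ?_⟩
    rw [← upperCut_chain_succ_mul_upperCut_chain hs.isSelfAdjoint, mul_assoc _ _ a, mul_assoc,
      hfix']

lemma IsSplitting.triangular_eq (hs : IsSplitting 0 a m h) (ha : a ^ (m + 1) = 0) :
    triangular h a m = a := by
  have hterm : ∀ k ∈ Finset.range m,
      (upperCut (chain h k) - upperCut (chain h (k + 1))) * a * lowerCut (chain h (k + 1)) =
        upperCut (chain h k) * a - upperCut (chain h (k + 1)) * a := fun k hk => by
    have hkm := Finset.mem_range.1 hk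
    obtain ⟨hnil, hfix⟩ := hs.upperCut_mul_pow ha hkm.le
    rw [sub_mul, sub_mul, (hs.succ hnil hfix).1, (hs.upperCut_mul_pow ha hkm).2]
  have hlast : upperCut (chain h m) * a = 0 := by
    simpa only [Nat.sub_self, zero_add, pow_one] using (hs.upperCut_mul_pow ha le_rfl).1
  rw [triangular, Finset.sum_congr rfl hterm,
    Finset.sum_range_sub' (fun k => upperCut (chain h k) * a), hlast, upperCut_chain_zero, one_mul,
    sub_zero]

end Splitting

section Stability

open Filter Topology
open scoped CStarAlgebra BoundedContinuousFunction

section NullIdeal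

variable {X : Type*} [TopologicalSpace X] (l : Filter X) (A : Type*) [NormedRing A]

/-- The bounded continuous functions that tend to `0` along `l`; for `l = atTop` on `ℕ` the quotient
by it is `ℓ^∞(A) / c₀(A)`. -/
def nullIdeal : Ideal (X →ᵇ A) where
  carrier := {f | Tendsto f l (𝓝 0)}
  zero_mem' := tendsto_const_nhds
  add_mem' hf hg := (add_zero (0 : A)) ▸ Tendsto.add hf hg
  smul_mem' c f hf := by
    refine squeeze_zero_norm (a := fun x => ‖c‖ * ‖f x‖) (fun x => ?_) ?_
    · exact (norm_mul_le _ _).trans (by gcongr; exact c.norm_coe_le_norm x)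
    · simpa only [norm_zero, mul_zero] using (Tendsto.norm hf).const_mul ‖c‖

instance isTwoSided_nullIdeal : (nullIdeal l A).IsTwoSided where
  mul_mem_of_left {f} c hf := by
    refine squeeze_zero_norm (a := fun x => ‖f x‖ * ‖c‖) (fun x => ?_) ?_
    · exact (norm_mul_le _ _).trans (by gcongr; exact c.norm_coe_le_norm x)
    · simpa only [norm_zero, zero_mul] using (Tendsto.norm hf).mul_const ‖c‖

instance isClosed_nullIdeal : IsClosed (nullIdeal l A : Set (X →ᵇ A)) := by
  refine isClosed_of_closure_subset fun f hf => Metric.tendsto_nhds.2 fun ε hε => ?_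
  obtain ⟨g, hg, hfg⟩ := Metric.mem_closure_iff.1 hf (ε / 2) (half_pos hε)
  filter_upwards [Metric.tendsto_nhds.1 hg (ε / 2) (half_pos hε)] with x hx
  linarith [dist_triangle (f x) (g x) 0, f.dist_coe_le_dist (g := g) x]

/-- Evaluation at a point of a bounded continuous function, as a *-homomorphism. -/
def evalStarAlgHom {A : Type*} [CStarAlgebra A] (x : X) : (X →ᵇ A) →⋆ₐ[ℂ] A where
  toFun f := f x
  map_one' := rfl
  map_mul' _ _ := rfl
  map_zero' := rfl
  map_add' _ _ := rfl
  commutes' _ := rfl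
  map_star' _ := rfl

end NullIdeal

variable {A : Type*} [CStarAlgebra A] {X : Type*} [TopologicalSpace X] {m : ℕ}

lemma isSplitting_of_forall_eval {η : ℝ} (hη : 0 ≤ η) {f : X →ᵇ A} {H : ℕ → X →ᵇ A}
    (hs : ∀ x, IsSplitting η (f x) m (evalStarAlgHom x ∘ H)) : IsSplitting η f m H := by
  have hsa : ∀ k, IsSelfAdjoint (H k) := fun k =>
    BoundedContinuousFunction.ext fun x => (hs x).isSelfAdjoint k
  refine ⟨hsa, fun k => ?_, fun k => ?_, fun k => ?_⟩
  · exact (BoundedContinuousFunction.norm_le zero_le_one).2 fun x => (hs x).norm_one_sub_le k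
  · refine BoundedContinuousFunction.ext fun x => ?_
    exact (map_mul_negPart_defect (evalStarAlgHom x) hsa f (m - k) k).trans ((hs x).mul_negPart k)
  · refine (BoundedContinuousFunction.norm_le hη).2 fun x => ?_
    exact (congrArg norm (map_posPart_defect_mul (evalStarAlgHom x) hsa f (m - k) k)).le.trans
      ((hs x).norm_posPart_mul_le k)

lemma isSplitting_quotient_nullIdeal {l : Filter X} {η : X → ℝ} (hη : Tendsto η l (𝓝 0)) {C : ℝ}
    (hC : 0 ≤ C) (hηC : ∀ x, η x ≤ C) {f : X →ᵇ A} {H : ℕ → X →ᵇ A}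
    (hs : ∀ x, IsSplitting (η x) (f x) m (evalStarAlgHom x ∘ H)) :
    IsSplitting 0 (quotientStarAlgHom (nullIdeal l A) f) m
      (quotientStarAlgHom (nullIdeal l A) ∘ H) := by
  have hsC : IsSplitting C f m H := isSplitting_of_forall_eval hC fun x => (hs x).mono (hηC x)
  refine { hsC.map (quotientStarAlgHom (nullIdeal l A)) with norm_posPart_mul_le := fun k => ?_ }
  rw [← map_posPart_defect_mul _ hsC.isSelfAdjoint, norm_le_zero_iff]
  refine Ideal.Quotient.eq_zero_iff_mem.2 (squeeze_zero_norm (fun x => ?_) hη)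
  exact (congrArg norm (map_posPart_defect_mul (evalStarAlgHom x) hsC.isSelfAdjoint f (m - k) k)
    ).le.trans ((hs x).norm_posPart_mul_le k)

lemma tendsto_triangular_sub {l : Filter X} {f : X →ᵇ A} {H : ℕ → X →ᵇ A}
    (hH : ∀ k, IsSelfAdjoint (H k))
    (hs : IsSplitting 0 (quotientStarAlgHom (nullIdeal l A) f) m
      (quotientStarAlgHom (nullIdeal l A) ∘ H))
    (hf : quotientStarAlgHom (nullIdeal l A) f ^ (m + 1) = 0) :
    Tendsto (fun x => triangular (evalStarAlgHom x ∘ H) (f x) m - f x) l (𝓝 0) := by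
  have hmem : triangular H f m - f ∈ nullIdeal l A := by
    refine Ideal.Quotient.eq_zero_iff_mem.1
      ((map_sub (quotientStarAlgHom (nullIdeal l A)) _ _).trans ?_)
    rw [map_triangular _ hH, hs.triangular_eq hf, sub_self]
  refine hmem.congr fun x => ?_
  exact congrArg (· - f x) (map_triangular (evalStarAlgHom x) hH f m)

theorem exists_forall_norm_triangular_sub_le (A : Type*) [CStarAlgebra A] (m : ℕ) (M : ℝ) {ε : ℝ}
    (hε : 0 < ε) : ∃ δ > 0, ∀ (a y : A) (h : ℕ → A), ‖a‖ ≤ M → y ^ (m + 1) = 0 → ‖a - y‖ ≤ δ →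
      IsSplitting δ a m h → ‖triangular h a m - a‖ ≤ ε := by
  by_contra! hcontra
  choose a y h ha hy hay hs hT using fun i : ℕ =>
    hcontra (1 / ((i : ℝ) + 1)) Nat.one_div_pos_of_nat
  have hδ_le : ∀ i : ℕ, 1 / ((i : ℝ) + 1) ≤ 1 := fun i =>
    div_le_one_of_le₀ (by linarith [i.cast_nonneg (α := ℝ)]) (by positivity)
  let f : ℕ →ᵇ A := .ofNormedAddCommGroupDiscrete a M ha
  let d : ℕ →ᵇ A := .ofNormedAddCommGroupDiscrete (a - y) 1 fun i => (hay i).trans (hδ_le i)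
  let g (k : ℕ) : ℕ →ᵇ A := .ofNormedAddCommGroupDiscrete (fun i => 1 - h i k) 1 fun i =>
    (hs i).norm_one_sub_le k
  have heval : ∀ i, evalStarAlgHom i ∘ (1 - g) = h i := fun i =>
    funext fun k => sub_sub_cancel 1 (h i k)
  let q := quotientStarAlgHom (nullIdeal atTop A (X := ℕ))
  have hqd : q d = 0 := Ideal.Quotient.eq_zero_iff_mem.2 <|
    squeeze_zero_norm hay tendsto_one_div_add_atTop_nhds_zero_nat
  have hfd : (f - d) ^ (m + 1) = 0 := BoundedContinuousFunction.ext fun i =>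
    (congrArg (· ^ (m + 1)) (sub_sub_cancel (a i) (y i))).trans (hy i)
  have hqf : q f ^ (m + 1) = 0 := by
    rw [show q f = q (f - d) by rw [map_sub, hqd, sub_zero], ← map_pow, hfd, map_zero]
  have hsH : ∀ i : ℕ, IsSplitting (1 / ((i : ℝ) + 1)) (f i) m (evalStarAlgHom i ∘ (1 - g)) :=
    fun i => (heval i).symm ▸ hs i
  have hsa : ∀ k, IsSelfAdjoint ((1 - g) k) := fun k =>
    BoundedContinuousFunction.ext fun i => (hsH i).isSelfAdjoint k
  have hsplit : IsSplitting 0 (q f) m (q ∘ (1 - g)) :=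
    isSplitting_quotient_nullIdeal tendsto_one_div_add_atTop_nhds_zero_nat zero_le_one hδ_le hsH
  have hlim := (tendsto_triangular_sub hsa hsplit hqf).norm
  simp only [heval, norm_zero] at hlim
  exact hε.not_ge (ge_of_tendsto' hlim fun i => (hT i).le)

end Stability

section Lifting

open Filter Topology
open scoped CStarAlgebra

variable {A B : Type*} [CStarAlgebra A] [CStarAlgebra B] {φ : A →⋆ₐ[ℂ] B}

lemma exists_lift_norm_le (hφ : Function.Surjective φ) :
    ∃ C > 0, ∀ z, ∃ x, φ x = z ∧ ‖x‖ ≤ C * ‖z‖ :=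
  ContinuousLinearMap.exists_preimage_norm_le ⟨φ.toAlgHom.toLinearMap, map_continuous φ⟩ hφ

lemma exists_lift_near_nilpotent (hφ : Function.Surjective φ) (m : ℕ) (M : ℝ) {ε : ℝ}
    (hε : 0 < ε) : ∃ δ > 0, ∀ a y, ‖a‖ ≤ M → φ a ^ (m + 1) = 0 → y ^ (m + 1) = 0 →
      ‖a - y‖ ≤ δ → ∀ γ > 0, ∃ a' y', φ a' = φ a ∧ ‖a' - a‖ ≤ ε ∧ y' ^ (m + 1) = 0 ∧
        ‖a' - y'‖ ≤ γ := by
  obtain ⟨C, hC, hlift⟩ := exists_lift_norm_le hφ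
  obtain ⟨δ, hδ, hstable⟩ := exists_forall_norm_triangular_sub_le A m M (half_pos hε)
  refine ⟨δ, hδ, fun a y ha hφa hy hay γ hγ => ?_⟩
  obtain ⟨ρ, hρ, hstableB⟩ := exists_forall_norm_triangular_sub_le B m ‖φ a‖
    (div_pos (lt_min (half_pos hε) hγ) hC)
  obtain ⟨h, hs⟩ := exists_isSplitting (lt_min hδ hρ) a m
  have hT : ‖triangular h a m - a‖ ≤ ε / 2 := hstable a y h ha hy hay (hs.mono (min_le_left _ _))
  have hφT : ‖φ (triangular h a m) - φ a‖ ≤ min (ε / 2) γ / C := by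
    rw [map_triangular φ hs.isSelfAdjoint]
    exact hstableB (φ a) (φ a) _ le_rfl hφa (by rw [sub_self, norm_zero]; exact hρ.le)
      ((hs.mono (min_le_right _ _)).map φ)
  obtain ⟨d, hd, hdC⟩ := hlift (φ a - φ (triangular h a m))
  have hd_le : ‖d‖ ≤ min (ε / 2) γ := by
    rw [norm_sub_rev] at hφT
    exact hdC.trans ((le_div_iff₀' hC).1 hφT)
  refine ⟨triangular h a m + d, triangular h a m, by rw [map_add, hd, add_sub_cancel], ?_,
    triangular_pow hs.isSelfAdjoint a m, ?_⟩
  · calc ‖triangular h a m + d - a‖ = ‖(triangular h a m - a) + d‖ := by rw [add_sub_right_comm]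
      _ ≤ ‖triangular h a m - a‖ + ‖d‖ := norm_add_le _ _
      _ ≤ ε / 2 + ε / 2 := add_le_add hT (hd_le.trans (min_le_left _ _))
      _ = ε := add_halves ε
  · rw [add_sub_cancel_left]
    exact hd_le.trans (min_le_right _ _)

lemma exists_nilpotent_of_seq {b : B} {n : ℕ} {x y : ℕ → A} (hx : ∀ k, φ (x k) = b)
    (hstep : ∀ k, ‖x (k + 1) - x k‖ ≤ (1 / 2 : ℝ) ^ k) (hy : ∀ k, y k ^ n = 0)
    (hxy : ∀ k, ‖x k - y k‖ ≤ (1 / 2 : ℝ) ^ k) : ∃ a, φ a = b ∧ a ^ n = 0 := by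
  have hcauchy : CauchySeq x := cauchySeq_of_le_geometric (1 / 2) 1 (by norm_num) fun k => by
    rw [dist_comm, dist_eq_norm, one_mul]
    exact hstep k
  obtain ⟨a, ha⟩ := cauchySeq_tendsto_of_complete hcauchy
  have hsub : Tendsto (fun k => x k - y k) atTop (𝓝 0) := squeeze_zero_norm hxy
    (tendsto_pow_atTop_nhds_zero_of_lt_one (by norm_num) (by norm_num))
  have hya : Tendsto y atTop (𝓝 a) := by simpa only [sub_sub_cancel, sub_zero] using ha.sub hsub
  refine ⟨a, tendsto_nhds_unique (((map_continuous φ).tendsto a).comp ha) ?_,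
    tendsto_nhds_unique (hya.pow n) ?_⟩
  · exact tendsto_const_nhds.congr fun k => (hx k).symm
  · exact tendsto_const_nhds.congr fun k => (hy k).symm

lemma exists_nilpotent_lift_of_near (hφ : Function.Surjective φ) (m : ℕ) : ∃ δ > 0, ∀ a y,
    ‖a‖ ≤ 1 → φ a ^ (m + 1) = 0 → y ^ (m + 1) = 0 → ‖a - y‖ ≤ δ →
      ∃ x, φ x = φ a ∧ x ^ (m + 1) = 0 := by
  choose δ hδ himprove using fun k : ℕ =>
    exists_lift_near_nilpotent hφ m 3 (pow_pos (one_half_pos (α := ℝ)) k)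
  refine ⟨min (δ 0) 1, lt_min (hδ 0) one_pos, fun a y ha hφa hy hay => ?_⟩
  -- The norm bound `3 - 2 * 2⁻ᵏ` leaves room for a step of size `2⁻ᵏ` and stays below `3`.
  let P (k : ℕ) (p : A × A) : Prop := φ p.1 = φ a ∧ ‖p.1‖ ≤ 3 - 2 * (1 / 2 : ℝ) ^ k ∧
    p.2 ^ (m + 1) = 0 ∧ ‖p.1 - p.2‖ ≤ min (δ k) ((1 / 2) ^ k)
  have hP_zero : P 0 (a, y) := ⟨rfl, by norm_num [ha], hy, by simpa only [pow_zero] using hay⟩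
  have hP_succ : ∀ k p, P k p → ∃ p', P (k + 1) p' ∧ ‖p'.1 - p.1‖ ≤ (1 / 2 : ℝ) ^ k := by
    rintro k ⟨x, z⟩ ⟨hx, hnorm, hz, hxz⟩
    have hk : 0 < (1 / 2 : ℝ) ^ k := by positivity
    obtain ⟨x', z', hx', hstep, hz', hxz'⟩ := himprove k x z (by linarith) (by rw [hx, hφa]) hz
      (hxz.trans (min_le_left _ _)) (min (δ (k + 1)) ((1 / 2) ^ (k + 1)))
      (lt_min (hδ _) (by positivity))
    refine ⟨(x', z'), ⟨hx'.trans hx, ?_, hz', hxz'⟩, hstep⟩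
    have hnorm' : ‖x'‖ ≤ ‖x‖ + ‖x' - x‖ := norm_le_norm_add_norm_sub' x' x
    rw [pow_succ]
    dsimp only at hnorm ⊢
    linarith
  choose! refined hrefined hrefined_sub using hP_succ
  let s (k : ℕ) : A × A := Nat.rec (a, y) refined k
  have hs : ∀ k, P k (s k) := fun k => Nat.rec hP_zero (fun k ih => hrefined k (s k) ih) k
  exact exists_nilpotent_of_seq (fun k => (hs k).1) (fun k => hrefined_sub k (s k) (hs k))
    (fun k => (hs k).2.2.1) fun k => (hs k).2.2.2.trans (min_le_right _ _)

theorem exists_nilpotent_lift (hφ : Function.Surjective φ) {m : ℕ} {b : B}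
    (hb : b ^ (m + 1) = 0) : ∃ a, φ a = b ∧ a ^ (m + 1) = 0 := by
  obtain ⟨δ, hδ, hnear⟩ := exists_nilpotent_lift_of_near hφ m
  obtain ⟨c, rfl⟩ := hφ b
  have hr : 0 < min 1 δ / (‖c‖ + 1) := by positivity
  set r : ℝ := min 1 δ / (‖c‖ + 1)
  have hrc : ‖(r : ℂ) • c‖ ≤ min 1 δ := by
    rw [norm_smul, Complex.norm_real, Real.norm_of_nonneg hr.le]
    calc r * ‖c‖ ≤ r * (‖c‖ + 1) := by gcongr; linarith
      _ = min 1 δ := div_mul_cancel₀ _ (by positivity)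
  obtain ⟨x, hx, hx0⟩ := hnear ((r : ℂ) • c) 0 (hrc.trans (min_le_left _ _))
    (by rw [map_smul, smul_pow, hb, smul_zero]) (zero_pow m.succ_ne_zero)
    (by rw [sub_zero]; exact hrc.trans (min_le_right _ _))
  refine ⟨(r : ℂ)⁻¹ • x, ?_, by rw [smul_pow, hx0, smul_zero]⟩
  rw [map_smul, hx, map_smul, inv_smul_smul₀ (Complex.ofReal_ne_zero.2 hr.ne')]

end Lifting

section Renorming

open scoped CStarAlgebra

attribute [local instance] CStarAlgebra.spectralOrder CStarAlgebra.spectralOrderedRing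

variable {A B : Type*} [CStarAlgebra A] [CStarAlgebra B]

/-- The truncated series `∑ k < n, (aᵏ)⋆ y aᵏ`, which for `a ^ n = 0` solves the Stein equation
`x - a⋆ x a = y`. -/
def steinSum {R : Type*} [Semiring R] [Star R] (a : R) (n : ℕ) (y : R) : R :=
  ∑ k ∈ Finset.range n, star (a ^ k) * y * a ^ k

lemma steinSum_sub_of_pow_eq_zero {R : Type*} [Ring R] [StarRing R] {a : R} {n : ℕ}
    (ha : a ^ n = 0) (y : R) : steinSum a n y - star a * steinSum a n y * a = y := by
  have hshift : star a * steinSum a n y * a =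
      ∑ k ∈ Finset.range n, star (a ^ (k + 1)) * y * a ^ (k + 1) := by
    simp only [steinSum, Finset.mul_sum, Finset.sum_mul, pow_succ, star_mul, mul_assoc]
  rw [hshift, steinSum, ← Finset.sum_sub_distrib,
    Finset.sum_range_sub' (fun k => star (a ^ k) * y * a ^ k), ha, mul_zero, sub_zero, pow_zero,
    star_one, one_mul, mul_one]

lemma steinSum_nonneg {a y : A} (hy : 0 ≤ y) (n : ℕ) : 0 ≤ steinSum a n y :=
  Finset.sum_nonneg fun k _ => star_left_conjugate_nonneg hy (a ^ k)

lemma norm_le_one_iff_star_mul_self_le_one {a : A} : ‖a‖ ≤ 1 ↔ star a * a ≤ 1 := by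
  rw [← CStarAlgebra.norm_le_one_iff_of_nonneg _ (star_mul_self_nonneg a),
    CStarRing.norm_star_mul_self, ← sq, sq_le_one_iff₀ (norm_nonneg a)]

lemma map_posPart_star_mul_self_sub_one (φ : A →⋆ₐ[ℂ] B) {a : A} (ha : ‖φ a‖ ≤ 1) :
    φ (star a * a - 1)⁺ = 0 := by
  have hsa : IsSelfAdjoint (star a * a - 1) := (IsSelfAdjoint.star_mul_self a).sub (.one A)
  rw [map_posPart φ hsa, CFC.posPart_eq_zero_iff _ (hsa.map φ), map_sub, map_mul, map_star,
    map_one, sub_nonpos]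
  exact norm_le_one_iff_star_mul_self_le_one.1 ha

lemma norm_units_conj_le_one {a : A} (u : Aˣ) (hu : IsSelfAdjoint (u : A))
    (h : star a * (u * u) * a ≤ u * u) : ‖u * a * ↑u⁻¹‖ ≤ 1 := by
  have hv : star (↑u⁻¹ : A) = ↑u⁻¹ := by
    have hu' : star u = u := Units.ext hu
    rw [← Units.coe_star, star_inv, hu']
  rw [norm_le_one_iff_star_mul_self_le_one]
  calc star (u * a * ↑u⁻¹) * (u * a * ↑u⁻¹) = star ↑u⁻¹ * (star a * (u * u) * a) * ↑u⁻¹ := by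
        simp only [star_mul, hu.star_eq, mul_assoc]
    _ ≤ star ↑u⁻¹ * (u * u) * ↑u⁻¹ := star_left_conjugate_le_conjugate h _
    _ = 1 := by rw [hv, ← mul_assoc, Units.inv_mul, one_mul, Units.mul_inv]

lemma exists_star_conj_le_self (φ : A →⋆ₐ[ℂ] B) {n : ℕ} {a : A} (ha : a ^ n = 0)
    (hφa : ‖φ a‖ ≤ 1) : ∃ p, 1 ≤ p ∧ star a * p * a ≤ p ∧ φ p = 1 := by
  set w := star a * a - 1 with hw
  have hwsa : IsSelfAdjoint w := (IsSelfAdjoint.star_mul_self a).sub (.one A)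
  refine ⟨1 + steinSum a n w⁺,
    le_add_of_nonneg_right (steinSum_nonneg (CFC.posPart_nonneg w) n), sub_nonneg.1 ?_, ?_⟩
  · calc 0 ≤ w⁻ := CFC.negPart_nonneg w
      _ = w⁺ - w := sub_eq_of_eq_add' (sub_eq_iff_eq_add.1 (CFC.posPart_sub_negPart w)) |>.symm
      _ = (steinSum a n w⁺ - star a * steinSum a n w⁺ * a) - w := by
        rw [steinSum_sub_of_pow_eq_zero ha]
      _ = 1 + steinSum a n w⁺ - star a * (1 + steinSum a n w⁺) * a := by rw [hw]; noncomm_ring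
  · have hφw : φ w⁺ = 0 := map_posPart_star_mul_self_sub_one φ hφa
    simp only [steinSum, map_add, map_one, map_sum, map_mul, hφw, mul_zero, zero_mul,
      Finset.sum_const_zero, add_zero]

lemma exists_units_mul_self_eq (φ : A →⋆ₐ[ℂ] B) {p : A} (hp : 1 ≤ p) (hφp : φ p = 1) :
    ∃ u : Aˣ, 0 ≤ (u : A) ∧ (u * u : A) = p ∧ φ u = 1 := by
  have hp0 : 0 ≤ p := zero_le_one.trans hp
  obtain ⟨u, hu⟩ : IsUnit (CFC.sqrt p) :=
    (CFC.isUnit_sqrt_iff p).2 (CStarAlgebra.isUnit_of_le 1 hp)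
  have hu0 : 0 ≤ (u : A) := hu ▸ CFC.sqrt_nonneg p
  have huu : (u * u : A) = p := by rw [hu, CFC.sqrt_mul_sqrt_self p]
  refine ⟨u, hu0, huu, ?_⟩
  calc φ u = CFC.sqrt 1 :=
        (CFC.sqrt_unique (by rw [← map_mul, huu, hφp]) (map_nonneg φ hu0)).symm
    _ = 1 := CFC.sqrt_one

theorem exists_norm_le_one_of_pow_eq_zero (φ : A →⋆ₐ[ℂ] B) {n : ℕ} {a : A} (ha : a ^ n = 0)
    (hφa : ‖φ a‖ ≤ 1) : ∃ a', φ a' = φ a ∧ a' ^ n = 0 ∧ ‖a'‖ ≤ 1 := by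
  obtain ⟨p, hp1, hap, hφp⟩ := exists_star_conj_le_self φ ha hφa
  obtain ⟨u, hu0, rfl, hφu⟩ := exists_units_mul_self_eq φ hp1 hφp
  have hφv : φ ↑u⁻¹ = 1 := by
    simpa only [map_mul, hφu, one_mul, map_one] using congrArg φ u.mul_inv
  refine ⟨u * a * ↑u⁻¹, ?_, ?_, norm_units_conj_le_one u (.of_nonneg hu0) hap⟩
  · rw [map_mul, map_mul, hφu, hφv, one_mul, mul_one]
  · rw [u.conj_pow, ha, mul_zero, zero_mul]

end Renorming

theorem exists_nilpotent_contraction_lift {A B : Type*} [CStarAlgebra A] [CStarAlgebra B]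
    {φ : A →⋆ₐ[ℂ] B} (hφ : Function.Surjective φ) {m : ℕ} {b : B} (hb : b ^ (m + 1) = 0)
    (hb_norm : ‖b‖ ≤ 1) : ∃ a, φ a = b ∧ a ^ (m + 1) = 0 ∧ ‖a‖ ≤ 1 := by
  obtain ⟨a, rfl, ha⟩ := exists_nilpotent_lift hφ hb
  exact exists_norm_le_one_of_pow_eq_zero φ ha hb_norm

end NilpotentLifting

/-- **Lifting of nilpotent contractions.**  Let `A` be a C*-algebra, `I` a closed
two-sided ideal of `A`, and `n ≥ 1`.  If `b ∈ A/I` satisfies `b ^ n = 0` and `‖b‖ ≤ 1`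
in the quotient norm, then `b` lifts to some `a ∈ A` with `a ^ n = 0` and `‖a‖ ≤ 1`.
Here the quotient element is encoded by a representative `b : A`: the condition
`b ^ n = 0` in `A/I` reads `b ^ n ∈ I`, the quotient norm of `b + I` is
`infDist b I`, and `a + I = b + I` reads `a - b ∈ I`. -/
theorem lift_nilpotent_contraction
    {A : Type*} [CStarAlgebra A]
    (I : Submodule ℂ A) (hIclosed : IsClosed (I : Set A))
    (hIideal : ∀ a : A, ∀ x ∈ I, a * x ∈ I ∧ x * a ∈ I)
    (n : ℕ) (hn : 1 ≤ n) (b : A)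
    (hnil : b ^ n ∈ I) (hnorm : Metric.infDist b (I : Set A) ≤ 1) :
    ∃ a : A, a - b ∈ I ∧ a ^ n = 0 ∧ ‖a‖ ≤ 1 := by
  obtain ⟨m, rfl⟩ := Nat.exists_eq_add_of_le' hn
  let J : Ideal A := { I with smul_mem' := fun a x hx => (hIideal a x hx).1 }
  have hJ_twoSided : J.IsTwoSided := ⟨fun {x} a hx => (hIideal a x hx).2⟩
  have hJ_closed : IsClosed (J : Set A) := hIclosed
  obtain ⟨a, hab, ha, ha_norm⟩ := NilpotentLifting.exists_nilpotent_contraction_lift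
    (φ := NilpotentLifting.quotientStarAlgHom J) Ideal.Quotient.mk_surjective
    (b := Ideal.Quotient.mk J b) (Ideal.Quotient.eq_zero_iff_mem.2 hnil)
    ((QuotientAddGroup.norm_mk (S := J.toAddSubgroup) b).trans_le hnorm)
  exact ⟨a, Ideal.Quotient.eq.1 hab, ha, ha_norm⟩
end

section
/- Let I be a C*-algebra, M(I) its multiplier algebra, and n ≥ 1 a natural number. If b is an element of the corona algebra M(I)/I with b^n = 0 and ‖b‖ ≤ 1, then there exists a ∈ M(I) with a + I = b, a^n = 0, and ‖a‖ ≤ 1. -/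
open MultiplierAlgebra

/-!
Suppose first that the closed ideal `J` is a separable C⋆-algebra inside its multiplier algebra.
Then the quotient by `J` has Pedersen's SAW⋆ property: if `y * z = 0`, then some `E` satisfies
`y * E = 0` and `E * z = z`. Applied repeatedly to a contraction `x` with `x ^ n ∈ J`, this
produces a flag of approximate projections, which satisfy their unit relations exactly and which
`x` lowers by one step modulo `J`. Compressing `x` to the strictly upper triangular part with
respect to the flag changes it only by an element of `J` and makes it exactly nilpotent.

The norm of this lift `a` is lowered to `1` step by step, by a factor `1 + 1 / (8 n²)` at a time.
If `‖a‖` exceeds the target by at most this factor, there is a small positive `w ∈ J` such that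
multiplying `a` by the square root of `1 - w` achieves the target, but this destroys triangularity.
The pinching `W` of `w`, which is `n` times its block diagonal part, dominates `w`, is still a
contraction in `J`, and is compatible with the flag; so `a (1 - W)` is triangular, and
`(1 - W)² ≤ 1 - w` gives the norm bound.

For an arbitrary closed ideal `J`, the unital C⋆-algebra generated by `x` is separable and maps to
the multiplier algebra of its intersection with `J`. A lift found there differs from the image of
`x` by an element of that intersection, so it comes from the algebra generated by `x`.
-/

namespace NilpotentLift

open Filter Topology Polynomial

attribute [local instance] CStarAlgebra.spectralOrder CStarAlgebra.spectralOrderedRing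

section FunctionalCalculus

variable {M : Type*} [CStarAlgebra M]

theorem spectrum_subset_Icc (s : M) : spectrum ℝ s ⊆ Set.Icc (-‖s‖) ‖s‖ := by
  intro x hx
  cases subsingleton_or_nontrivial M
  · simp [spectrum.of_subsingleton] at hx
  · exact abs_le.1 (spectrum.norm_le_norm_of_mem hx)

theorem exists_polynomial_tendstoUniformlyOn {f : ℝ → ℝ} (hf : Continuous f) (R : ℝ) :
    ∃ p : ℕ → ℝ[X], TendstoUniformlyOn (fun k t => (p k).eval t) f atTop (Set.Icc (-R) R) := by
  have hp (k : ℕ) : ∃ p : ℝ[X], ∀ t ∈ Set.Icc (-R) R, |p.eval t - f t| < 1 / ((k : ℝ) + 1) :=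
    exists_polynomial_near_of_continuousOn (-R) R f hf.continuousOn _ (by positivity)
  choose p hp using hp
  refine ⟨p, Metric.tendstoUniformlyOn_iff.2 fun ε hε => ?_⟩
  filter_upwards [tendsto_one_div_add_atTop_nhds_zero_nat.eventually_lt_const hε] with k hk t ht
  rw [dist_comm]
  exact (hp k t ht).trans hk

theorem tendsto_aeval_cfc {f : ℝ → ℝ} {R : ℝ} {p : ℕ → ℝ[X]}
    (hp : TendstoUniformlyOn (fun k t => (p k).eval t) f atTop (Set.Icc (-R) R))
    {s : M} (hs : IsSelfAdjoint s) (hR : ‖s‖ ≤ R) :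
    Tendsto (fun k => aeval s (p k)) atTop (𝓝 (cfc f s)) := by
  have hsub : spectrum ℝ s ⊆ Set.Icc (-R) R :=
    (spectrum_subset_Icc s).trans (Set.Icc_subset_Icc (neg_le_neg hR) hR)
  have h := tendsto_cfc_fun (a := s) (hp.mono hsub)
    (Eventually.of_forall fun k => (p k).continuous.continuousOn)
  exact h.congr fun k => cfc_polynomial (p k) s hs

end FunctionalCalculus

section IdealFunctionalCalculus

theorem aeval_intertwine_mem {M : Type*} [Ring M] [Algebra ℝ M] {J : Ideal M} [J.IsTwoSided]
    {s t z : M} (h : s * z - z * t ∈ J) (p : ℝ[X]) : aeval s p * z - z * aeval t p ∈ J := by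
  induction p using Polynomial.induction_on' with
  | add p q hp hq =>
    have := J.add_mem hp hq
    rwa [map_add, map_add, add_mul, mul_add, add_sub_add_comm]
  | monomial k r =>
    have hsemi : SemiconjBy (Ideal.Quotient.mk J z) (Ideal.Quotient.mk J t)
        (Ideal.Quotient.mk J s) := by
      rw [SemiconjBy, ← map_mul, ← map_mul, eq_comm]
      exact Ideal.Quotient.eq.2 h
    have hpow : s ^ k * z - z * t ^ k ∈ J := by
      rw [← Ideal.Quotient.eq, map_mul, map_mul, map_pow, map_pow]
      exact (hsemi.pow_right k).symm
    have := J.mul_mem_left (algebraMap ℝ M r) hpow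
    rwa [aeval_monomial, aeval_monomial, mul_assoc, ← mul_assoc z, ← Algebra.commutes, mul_assoc,
      ← mul_sub]

variable {M : Type*} [CStarAlgebra M] {J : Ideal M} [J.IsTwoSided]

theorem cfc_intertwine_mem (hJ : IsClosed (J : Set M)) {f : ℝ → ℝ} (hf : Continuous f)
    {s t z : M} (hs : IsSelfAdjoint s) (ht : IsSelfAdjoint t) (h : s * z - z * t ∈ J) :
    cfc f s * z - z * cfc f t ∈ J := by
  obtain ⟨p, hp⟩ := exists_polynomial_tendstoUniformlyOn hf (max ‖s‖ ‖t‖)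
  have hlim := ((tendsto_aeval_cfc hp hs (le_max_left _ _)).mul_const z).sub
    ((tendsto_aeval_cfc hp ht (le_max_right _ _)).const_mul z)
  exact hJ.mem_of_tendsto hlim (Eventually.of_forall fun k => aeval_intertwine_mem h (p k))

theorem cfc_sub_cfc_mem (hJ : IsClosed (J : Set M)) {f : ℝ → ℝ} (hf : Continuous f)
    {s t : M} (hs : IsSelfAdjoint s) (ht : IsSelfAdjoint t) (h : s - t ∈ J) :
    cfc f s - cfc f t ∈ J := by
  simpa using cfc_intertwine_mem hJ hf hs ht (z := 1) (by simpa using h)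

theorem mul_cfc_mem (hJ : IsClosed (J : Set M)) {f : ℝ → ℝ} (hf : Continuous f) (hf0 : f 0 = 0)
    {w l : M} (hl : IsSelfAdjoint l) (h : w * l ∈ J) : w * cfc f l ∈ J := by
  simpa [cfc_apply_zero, hf0] using
    cfc_intertwine_mem hJ hf (.zero M) hl (z := w) (by simpa using h)

theorem one_sub_cfc_mul_mem (hJ : IsClosed (J : Set M)) {f : ℝ → ℝ} (hf : Continuous f)
    (hf1 : f 1 = 1) {w l : M} (hl : IsSelfAdjoint l) (h : (1 - l) * w ∈ J) :
    (1 - cfc f l) * w ∈ J := by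
  have := cfc_intertwine_mem hJ hf hl (.one M) (z := w)
    (by simpa [sub_mul] using J.neg_mem h)
  rw [cfc_apply_one, hf1, map_one, mul_one] at this
  simpa [sub_mul] using J.neg_mem this

theorem cfc_mem (hJ : IsClosed (J : Set M)) {f : ℝ → ℝ} (hf : Continuous f) (hf0 : f 0 = 0)
    {c : M} (hc : IsSelfAdjoint c) (h : c ∈ J) : cfc f c ∈ J := by
  simpa using mul_cfc_mem hJ hf hf0 (w := 1) hc (by simpa using h)

end IdealFunctionalCalculus

section ClosedIdeal

variable {M : Type*} [CStarAlgebra M]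

/-- The continuous ramp of slope `r` cut off at `1`; as `r` grows, `cfc (ramp r) c` approximates
a unit for `c ≥ 0`. -/
noncomputable def ramp (r t : ℝ) : ℝ := min 1 (r * t)

theorem continuous_ramp (r : ℝ) : Continuous (ramp r) := by
  unfold ramp; fun_prop

@[simp] theorem ramp_zero_right (r : ℝ) : ramp r 0 = 0 := by simp [ramp]

@[simp] theorem ramp_zero_left (t : ℝ) : ramp 0 t = 0 := by simp [ramp]

theorem ramp_le_one (r t : ℝ) : ramp r t ≤ 1 := min_le_left _ _

theorem ramp_nonneg {r t : ℝ} (hr : 0 ≤ r) (ht : 0 ≤ t) : 0 ≤ ramp r t :=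
  le_min zero_le_one (mul_nonneg hr ht)

theorem ramp_eq_one {r t : ℝ} (h : 1 ≤ r * t) : ramp r t = 1 := min_eq_left h

theorem cfc_ramp_nonneg {r : ℝ} (hr : 0 ≤ r) {c : M} (hc : 0 ≤ c) : 0 ≤ cfc (ramp r) c :=
  cfc_nonneg fun _ ht => ramp_nonneg hr (spectrum_nonneg_of_nonneg hc ht)

theorem cfc_ramp_le_one (r : ℝ) (c : M) : cfc (ramp r) c ≤ 1 :=
  cfc_le_one _ c fun t _ => ramp_le_one r t

theorem norm_one_sub_cfc_ramp_conj_le {r : ℝ} (hr : 0 < r) {c : M} (hc : 0 ≤ c) :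
    ‖(1 - cfc (ramp r) c) * c * (1 - cfc (ramp r) c)‖ ≤ r⁻¹ := by
  have hsa : IsSelfAdjoint c := .of_nonneg hc
  have hcont := continuous_ramp r
  have heq : (1 - cfc (ramp r) c) * c * (1 - cfc (ramp r) c) =
      cfc (fun t => (1 - ramp r t) * t * (1 - ramp r t)) c := by
    rw [cfc_mul _ _ c (by fun_prop) (by fun_prop), cfc_mul _ _ c (by fun_prop) (by fun_prop),
      cfc_sub _ _ c (by fun_prop) (by fun_prop), cfc_const_one ℝ c, cfc_id' ℝ c]
  rw [heq]
  refine norm_cfc_le (by positivity) fun t ht => ?_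
  have ht0 : 0 ≤ t := spectrum_nonneg_of_nonneg hc ht
  have h0 : 0 ≤ 1 - ramp r t := sub_nonneg.2 (ramp_le_one r t)
  rw [Real.norm_of_nonneg (by positivity)]
  rcases le_total 1 (r * t) with h | h
  · rw [ramp_eq_one h]
    simpa using hr.le
  · calc (1 - ramp r t) * t * (1 - ramp r t) ≤ 1 * t * 1 := by
          gcongr <;> exact sub_le_self _ (ramp_nonneg hr.le ht0)
      _ ≤ r⁻¹ := by rwa [one_mul, mul_one, ← one_div, le_div_iff₀' hr]

variable {J : Ideal M} [J.IsTwoSided]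

theorem exists_mem_norm_mul_one_sub_le (hJ : IsClosed (J : Set M)) {c : M} (hc : 0 ≤ c)
    (hcJ : c ∈ J) {ε : ℝ} (hε : 0 < ε) :
    ∃ u ∈ J, 0 ≤ u ∧ u ≤ 1 ∧ ∀ g, star g * g ≤ c → ‖g * (1 - u)‖ ≤ ε := by
  set u := cfc (ramp (ε ^ 2)⁻¹) c
  have hu : 0 ≤ u := cfc_ramp_nonneg (by positivity) hc
  have hsa : star (1 - u) = 1 - u := ((IsSelfAdjoint.one M).sub (.of_nonneg hu)).star_eq
  refine ⟨u, cfc_mem hJ (continuous_ramp _) (ramp_zero_right _) (.of_nonneg hc) hcJ, hu,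
    cfc_ramp_le_one _ _, fun g hg => (sq_le_sq₀ (norm_nonneg _) hε.le).1 ?_⟩
  calc ‖g * (1 - u)‖ ^ 2 = ‖star (1 - u) * (star g * g) * (1 - u)‖ := by
        rw [sq, ← CStarRing.norm_star_mul_self, star_mul]
        simp only [mul_assoc]
    _ ≤ ‖star (1 - u) * c * (1 - u)‖ :=
        CStarAlgebra.norm_le_norm_of_nonneg_of_le
          (star_left_conjugate_nonneg (star_mul_self_nonneg g) _)
          (star_left_conjugate_le_conjugate hg _)
    _ ≤ ε ^ 2 := by
        rw [hsa]
        simpa using norm_one_sub_cfc_ramp_conj_le (r := (ε ^ 2)⁻¹) (by positivity) hc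

theorem exists_approximate_unit (hJ : IsClosed (J : Set M)) (G : Finset M) (hG : ∀ g ∈ G, g ∈ J)
    {ε : ℝ} (hε : 0 < ε) :
    ∃ u ∈ J, 0 ≤ u ∧ u ≤ 1 ∧ ∀ g ∈ G, ‖g * (1 - u)‖ ≤ ε := by
  obtain ⟨u, huJ, hu0, hu1, hu⟩ := exists_mem_norm_mul_one_sub_le hJ
    (Finset.sum_nonneg fun g _ => star_mul_self_nonneg g)
    (J.sum_mem fun g hg => J.mul_mem_left (star g) (hG g hg)) hε
  exact ⟨u, huJ, hu0, hu1, fun g hg =>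
    hu g (Finset.single_le_sum (fun g _ => star_mul_self_nonneg g) hg)⟩

theorem mem_of_mul_star_mem (hJ : IsClosed (J : Set M)) {s : M} (h : s * star s ∈ J) :
    s ∈ J := by
  rw [← SetLike.mem_coe, ← hJ.closure_eq, Metric.mem_closure_iff]
  intro ε hε
  obtain ⟨u, huJ, hu0, -, hu⟩ :=
    exists_mem_norm_mul_one_sub_le hJ (mul_star_self_nonneg s) h (half_pos hε)
  refine ⟨u * s, J.mul_mem_right s huJ, ?_⟩
  calc dist s (u * s) = ‖star s * (1 - u)‖ := by
        rw [dist_eq_norm, ← norm_star, star_sub, star_mul, (IsSelfAdjoint.of_nonneg hu0).star_eq,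
          mul_sub, mul_one]
    _ ≤ ε / 2 := hu _ (by rw [star_star])
    _ < ε := half_lt_self hε

theorem star_mem (hJ : IsClosed (J : Set M)) {s : M} (h : s ∈ J) : star s ∈ J :=
  mem_of_mul_star_mem hJ (by simpa using J.mul_mem_left (star s) h)

end ClosedIdeal

section MultiplierAlgebra

variable {A : Type*} [NonUnitalCStarAlgebra A]

theorem norm_coe (a : A) : ‖(a : 𝓜(ℂ, A))‖ = ‖a‖ := by
  rw [← DoubleCentralizer.norm_fst, DoubleCentralizer.coe_fst]
  exact ContinuousLinearMap.opNorm_mul_apply ℂ A a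

theorem isometry_coe : Isometry (DoubleCentralizer.coeHom (𝕜 := ℂ) (A := A)) :=
  AddMonoidHomClass.isometry_of_norm _ norm_coe

theorem mul_coe (m : 𝓜(ℂ, A)) (a : A) : m * (a : 𝓜(ℂ, A)) = (m.fst a : 𝓜(ℂ, A)) := by
  refine DoubleCentralizer.ext _ _ _ _ (Prod.ext ?_ ?_)
  · refine ContinuousLinearMap.ext fun x => ?_
    change m.fst (a * x) = m.fst a * x
    have hy (y : A) : y * (m.fst (a * x) - m.fst a * x) = 0 := by
      rw [mul_sub, ← m.central, ← mul_assoc, ← mul_assoc, m.central, sub_self]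
    exact sub_eq_zero.1 ((CStarRing.star_mul_self_eq_zero_iff _).1 (hy _))
  · exact ContinuousLinearMap.ext fun x => m.central x a

theorem coe_mul (m : 𝓜(ℂ, A)) (a : A) : (a : 𝓜(ℂ, A)) * m = (m.snd a : 𝓜(ℂ, A)) := by
  have hstar (x : A) : ((star x : A) : 𝓜(ℂ, A)) = star (x : 𝓜(ℂ, A)) :=
    map_star (DoubleCentralizer.coeHom (𝕜 := ℂ) (A := A)) x
  have := congrArg star (mul_coe (star m) (star a))
  rwa [DoubleCentralizer.star_fst, star_star, hstar, hstar, star_mul, star_star, star_star,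
    star_star] at this

/-- The canonical copy of `A` inside its multiplier algebra. -/
noncomputable def multiplierIdeal (A : Type*) [NonUnitalCStarAlgebra A] : Ideal 𝓜(ℂ, A) where
  carrier := Set.range (DoubleCentralizer.coeHom (𝕜 := ℂ) (A := A))
  add_mem' := by
    rintro _ _ ⟨a, rfl⟩ ⟨b, rfl⟩
    exact ⟨a + b, map_add _ a b⟩
  zero_mem' := ⟨0, map_zero _⟩
  smul_mem' := by
    rintro m _ ⟨a, rfl⟩
    exact ⟨m.fst a, (mul_coe m a).symm⟩

theorem coe_mem_multiplierIdeal (a : A) : (a : 𝓜(ℂ, A)) ∈ multiplierIdeal A := ⟨a, rfl⟩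

instance : (multiplierIdeal A).IsTwoSided where
  mul_mem_of_left := by
    rintro _ m ⟨a, rfl⟩
    exact ⟨m.snd a, (coe_mul m a).symm⟩

theorem isClosed_multiplierIdeal : IsClosed (multiplierIdeal A : Set 𝓜(ℂ, A)) :=
  isometry_coe.isClosedEmbedding.isClosed_range

theorem eq_of_forall_mul_coe_eq {m m' : 𝓜(ℂ, A)} (h : ∀ a : A, m * a = m' * a) : m = m' := by
  rw [← sub_eq_zero, ← norm_eq_zero, ← DoubleCentralizer.norm_fst, norm_eq_zero]
  refine ContinuousLinearMap.ext fun a => isometry_coe.injective ?_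
  change (((m - m').fst a : A) : 𝓜(ℂ, A)) = DoubleCentralizer.coeHom 0
  rw [← mul_coe, sub_mul, h, sub_self, map_zero]

theorem exists_isSelfAdjoint_strict_limit {S : ℕ → 𝓜(ℂ, A)} (hS : ∀ N, IsSelfAdjoint (S N))
    (hc : ∀ a : A, CauchySeq fun N => S N * (a : 𝓜(ℂ, A))) :
    ∃ E : 𝓜(ℂ, A), IsSelfAdjoint E ∧
      ∀ a : A, Tendsto (fun N => S N * (a : 𝓜(ℂ, A))) atTop (𝓝 (E * a)) := by
  have hlim (a : A) : ∃ b, Tendsto (fun N => (S N).fst a) atTop (𝓝 b) := by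
    refine cauchySeq_tendsto_of_complete (isometry_coe.isUniformInducing.cauchy_map_iff.1 ?_)
    have := hc a
    rwa [funext fun N => mul_coe (S N) a] at this
  choose g hg using hlim
  have hg' (a : A) : Tendsto (fun N => (S N).snd a) atTop (𝓝 (star (g (star a)))) := by
    refine (hg (star a)).star.congr fun N => ?_
    rw [← DoubleCentralizer.star_snd, (hS N).star_eq]
  let E : 𝓜(ℂ, A) :=
    ⟨(continuousLinearMapOfTendsto (fun N => (S N).fst) (tendsto_pi_nhds.2 hg),
      continuousLinearMapOfTendsto (fun N => (S N).snd) (tendsto_pi_nhds.2 hg')), fun x y => by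
      refine tendsto_nhds_unique ((hg' x).mul_const y) ?_
      simp only [(S _).central]
      exact (hg y).const_mul x⟩
  have hE (a : A) : Tendsto (fun N => S N * (a : 𝓜(ℂ, A))) atTop (𝓝 (E * a)) := by
    rw [mul_coe, funext fun N => mul_coe (S N) a]
    exact (isometry_coe.continuous.tendsto _).comp (hg a)
  refine ⟨E, eq_of_forall_mul_coe_eq fun a => ?_, hE⟩
  rw [mul_coe, mul_coe, DoubleCentralizer.star_fst]
  change ((star (star (g (star (star a)))) : A) : 𝓜(ℂ, A)) = (g a : A)
  rw [star_star, star_star]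

theorem cauchySeq_mul_coe_of_denseRange {S : ℕ → 𝓜(ℂ, A)} (hS : ∀ N, ‖S N‖ ≤ 1) {e : ℕ → A}
    (he : DenseRange e) (hc : ∀ i, CauchySeq fun N => S N * (e i : 𝓜(ℂ, A))) (a : A) :
    CauchySeq fun N => S N * (a : 𝓜(ℂ, A)) := by
  refine Metric.cauchySeq_iff'.2 fun ε hε => ?_
  obtain ⟨i, hi⟩ := he.exists_dist_lt a (by positivity : 0 < ε / 3)
  have hSa (N : ℕ) : dist (S N * (a : 𝓜(ℂ, A))) (S N * (e i : 𝓜(ℂ, A))) < ε / 3 := by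
    rw [dist_eq_norm, ← mul_sub]
    calc ‖S N * ((a : 𝓜(ℂ, A)) - e i)‖ ≤ 1 * ‖(a : 𝓜(ℂ, A)) - e i‖ :=
          norm_mul_le_of_le (hS N) le_rfl
      _ = dist a (e i) := by rw [one_mul, ← dist_eq_norm]; exact isometry_coe.dist_eq a (e i)
      _ < ε / 3 := hi
  obtain ⟨K, hK⟩ := Metric.cauchySeq_iff'.1 (hc i) (ε / 3) (by positivity)
  refine ⟨K, fun N hN => ?_⟩
  have := dist_triangle4_right (S N * (a : 𝓜(ℂ, A))) (S K * (a : 𝓜(ℂ, A)))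
    (S N * (e i : 𝓜(ℂ, A))) (S K * (e i : 𝓜(ℂ, A)))
  linarith [hK N hN, hSa N, hSa K]

theorem mem_multiplierIdeal_of_strict_series {m : 𝓜(ℂ, A)} {t : ℕ → 𝓜(ℂ, A)}
    (ht : ∀ k, t k ∈ multiplierIdeal A) (hsum : Summable fun k => ‖t k‖)
    (hlim : ∀ a : A, Tendsto (fun N => (∑ k ∈ Finset.range N, t k) * (a : 𝓜(ℂ, A))) atTop
      (𝓝 (m * a))) :
    m ∈ multiplierIdeal A := by
  have hT := hsum.of_norm.hasSum.tendsto_sum_nat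
  have hm : m = ∑' k, t k :=
    eq_of_forall_mul_coe_eq fun a => tendsto_nhds_unique (hlim a) (hT.mul_const _)
  rw [hm]
  exact isClosed_multiplierIdeal.mem_of_tendsto hT
    (Eventually.of_forall fun N => Ideal.sum_mem _ fun k _ => ht k)

end MultiplierAlgebra

section Slices

/-- The square root of the difference of the ramps of slopes `2 ^ (k + 1) - 1` and `2 ^ k - 1`.
The squares of the slices form a partition of unity on `(0, ∞)`, and `slice k` is concentrated
near `0` in the sense that `slice k t * t` is of order `2⁻ᵏ`. -/
noncomputable def slice (k : ℕ) (t : ℝ) : ℝ := √(ramp (2 ^ (k + 1) - 1) t - ramp (2 ^ k - 1) t)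

theorem continuous_slice (k : ℕ) : Continuous (slice k) :=
  ((continuous_ramp _).sub (continuous_ramp _)).sqrt

@[simp] theorem slice_zero_right (k : ℕ) : slice k 0 = 0 := by simp [slice]

theorem slice_nonneg (k : ℕ) (t : ℝ) : 0 ≤ slice k t := Real.sqrt_nonneg _

theorem two_pow_sub_one_nonneg (k : ℕ) : (0 : ℝ) ≤ 2 ^ k - 1 :=
  sub_nonneg.2 (one_le_pow₀ one_le_two)

theorem slice_mul_slice (k : ℕ) {t : ℝ} (ht : 0 ≤ t) :
    slice k t * slice k t = ramp (2 ^ (k + 1) - 1) t - ramp (2 ^ k - 1) t := by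
  refine Real.mul_self_sqrt (sub_nonneg.2 (min_le_min_left 1 (mul_le_mul_of_nonneg_right ?_ ht)))
  gcongr
  exacts [one_le_two, k.le_succ]

theorem slice_le_one (k : ℕ) {t : ℝ} (ht : 0 ≤ t) : slice k t ≤ 1 := by
  refine Real.sqrt_le_one.2 ?_
  linarith [ramp_le_one (2 ^ (k + 1) - 1) t, ramp_nonneg (two_pow_sub_one_nonneg k) ht]

theorem mul_le_half_pow {k : ℕ} {q t R : ℝ} (ht : 0 ≤ t) (htR : t ≤ R) (hq1 : q ≤ 1)
    (hq : 1 ≤ (2 ^ k - 1) * t → q = 0) : q * t ≤ (1 + R) * (1 / 2) ^ k := by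
  have hR : 0 ≤ R := ht.trans htR
  rcases le_or_gt 1 ((2 ^ k - 1) * t) with h | h
  · rw [hq h, zero_mul]
    positivity
  · rw [one_div, inv_pow, ← div_eq_mul_inv, le_div_iff₀ (by positivity)]
    calc q * t * 2 ^ k ≤ 1 * t * 2 ^ k := by gcongr
      _ = (2 ^ k - 1) * t + t := by ring
      _ ≤ 1 + R := add_le_add h.le htR

theorem slice_mul_le (k : ℕ) {t R : ℝ} (ht : 0 ≤ t) (htR : t ≤ R) :
    slice k t * t ≤ (1 + R) * (1 / 2) ^ k := by
  refine mul_le_half_pow ht htR (slice_le_one k ht) fun h => ?_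
  have h' : (1 : ℝ) ≤ (2 ^ (k + 1) - 1) * t := h.trans (by gcongr; exacts [one_le_two, k.le_succ])
  rw [slice, ramp_eq_one h, ramp_eq_one h', sub_self, Real.sqrt_zero]

theorem one_sub_ramp_mul_le (k : ℕ) {t R : ℝ} (ht : 0 ≤ t) (htR : t ≤ R) :
    (1 - ramp (2 ^ k - 1) t) * t ≤ (1 + R) * (1 / 2) ^ k := by
  refine mul_le_half_pow ht htR
    (sub_le_self _ (ramp_nonneg (two_pow_sub_one_nonneg k) ht)) fun h => ?_
  rw [ramp_eq_one h, sub_self]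

variable {M : Type*} [CStarAlgebra M] {z : M}

theorem norm_cfc_slice_le_one (k : ℕ) (hz : 0 ≤ z) : ‖cfc (slice k) z‖ ≤ 1 :=
  norm_cfc_le zero_le_one fun t ht => by
    rw [Real.norm_of_nonneg (slice_nonneg k t)]
    exact slice_le_one k (spectrum_nonneg_of_nonneg hz ht)

theorem sum_cfc_slice_mul_self (N : ℕ) (hz : 0 ≤ z) :
    ∑ k ∈ Finset.range N, cfc (slice k) z * cfc (slice k) z = cfc (ramp (2 ^ N - 1)) z := by
  have hterm (k : ℕ) : cfc (slice k) z * cfc (slice k) z =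
      cfc (ramp (2 ^ (k + 1) - 1)) z - cfc (ramp (2 ^ k - 1)) z := by
    rw [← cfc_mul _ _ z (continuous_slice k).continuousOn (continuous_slice k).continuousOn,
      ← cfc_sub _ _ z (continuous_ramp _).continuousOn (continuous_ramp _).continuousOn]
    exact cfc_congr fun t ht => slice_mul_slice k (spectrum_nonneg_of_nonneg hz ht)
  have hzero : cfc (ramp (2 ^ 0 - 1)) z = 0 := by
    rw [pow_zero, sub_self, funext ramp_zero_left, cfc_const_zero]
  simp only [hterm]
  rw [Finset.sum_range_sub fun k => cfc (ramp (2 ^ k - 1)) z, hzero, sub_zero]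

theorem norm_cfc_mul_self_le {f : ℝ → ℝ} (hf : Continuous f) (hz : 0 ≤ z) {C : ℝ} (hC : 0 ≤ C)
    (h : ∀ t, 0 ≤ t → t ≤ ‖z‖ → |f t * t| ≤ C) : ‖cfc f z * z‖ ≤ C := by
  have heq : cfc f z * z = cfc (fun t => f t * t) z := by
    rw [cfc_mul _ _ z (by fun_prop) (by fun_prop), cfc_id' ℝ z (.of_nonneg hz)]
  rw [heq]
  exact norm_cfc_le hC fun t ht =>
    h t (spectrum_nonneg_of_nonneg hz ht) (spectrum_subset_Icc z ht).2

theorem norm_cfc_slice_mul_self_le (k : ℕ) (hz : 0 ≤ z) :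
    ‖cfc (slice k) z * z‖ ≤ (1 + ‖z‖) * (1 / 2) ^ k :=
  norm_cfc_mul_self_le (continuous_slice k) hz (by positivity) fun t ht htz => by
    rw [abs_of_nonneg (mul_nonneg (slice_nonneg k t) ht)]
    exact slice_mul_le k ht htz

theorem tendsto_cfc_ramp_mul_self (hz : 0 ≤ z) :
    Tendsto (fun N : ℕ => cfc (ramp (2 ^ N - 1)) z * z) atTop (𝓝 z) := by
  have hle (N : ℕ) : ‖cfc (ramp (2 ^ N - 1)) z * z - z‖ ≤ (1 + ‖z‖) * (1 / 2) ^ N := by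
    have heq : cfc (ramp (2 ^ N - 1)) z * z - z =
        -(cfc (fun t => 1 - ramp (2 ^ N - 1) t) z * z) := by
      rw [cfc_sub _ _ z (by fun_prop) (continuous_ramp _).continuousOn,
        cfc_const_one ℝ z (.of_nonneg hz), sub_mul, one_mul, neg_sub]
    rw [heq, norm_neg]
    refine norm_cfc_mul_self_le (f := fun t => 1 - ramp (2 ^ N - 1) t)
      (continuous_const.sub (continuous_ramp _)) hz (by positivity)
      fun t ht htz => ?_
    rw [abs_of_nonneg (mul_nonneg (sub_nonneg.2 (ramp_le_one _ _)) ht)]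
    exact one_sub_ramp_mul_le N ht htz
  rw [tendsto_iff_norm_sub_tendsto_zero]
  refine squeeze_zero (fun _ => norm_nonneg _) hle ?_
  simpa using (tendsto_pow_atTop_nhds_zero_of_lt_one (r := (1 / 2 : ℝ))
    (by norm_num) (by norm_num)).const_mul (1 + ‖z‖)

end Slices

section SAWStar

/-- The condition on `J` which says that the quotient by `J` is an SAW*-algebra in the sense of
Pedersen: whenever `y * z = 0` in the quotient, some self-adjoint `E` there satisfies `y * E = 0`
and `E * z = z`. A finite set of elements `y` is allowed. -/
def IsSAWStar {M : Type*} [CStarAlgebra M] (J : Ideal M) : Prop :=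
  ∀ (Y : Finset M) (z : M), (∀ y ∈ Y, y * z ∈ J) →
    ∃ E, IsSelfAdjoint E ∧ (∀ y ∈ Y, y * E ∈ J) ∧ (1 - E) * z ∈ J

theorem exists_mem_norm_le_half_pow {M : Type*} [CStarAlgebra M] {J : Ideal M} [J.IsTwoSided]
    (hJ : IsClosed (J : Set M)) (Y : Finset M) {φ e : ℕ → M} (hφ : ∀ k, IsSelfAdjoint (φ k))
    (hY : ∀ y ∈ Y, ∀ k, y * φ k ∈ J) (he : ∀ i, e i ∈ J) (k : ℕ) :
    ∃ u ∈ J, 0 ≤ u ∧ u ≤ 1 ∧ (∀ y ∈ Y, ‖y * φ k * (1 - u)‖ ≤ (1 / 2) ^ k) ∧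
      ∀ i ≤ k, ‖(1 - u) * φ k * e i‖ ≤ (1 / 2) ^ k := by
  classical
  obtain ⟨u, huJ, hu0, hu1, hu⟩ := exists_approximate_unit hJ
    (Y.image (· * φ k) ∪ (Finset.range (k + 1)).image fun i => star (e i) * φ k)
    (by
      intro g hg
      rcases Finset.mem_union.1 hg with hg | hg <;> obtain ⟨x, hx, rfl⟩ := Finset.mem_image.1 hg
      exacts [hY x hx k, J.mul_mem_right _ (star_mem hJ (he x))])
    (by positivity : (0 : ℝ) < (1 / 2) ^ k)
  refine ⟨u, huJ, hu0, hu1, fun y hy =>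
    hu _ (Finset.mem_union_left _ (Finset.mem_image_of_mem _ hy)), fun i hi => ?_⟩
  have hstar : star ((1 - u) * φ k * e i) = star (e i) * φ k * (1 - u) := by
    rw [star_mul, star_mul, (hφ k).star_eq, star_sub, star_one,
      (IsSelfAdjoint.of_nonneg hu0).star_eq, mul_assoc]
  rw [← norm_star, hstar]
  exact hu _ (Finset.mem_union_right _
    (Finset.mem_image_of_mem _ (Finset.mem_range.2 (Nat.lt_succ_of_le hi))))

variable {A : Type*} [NonUnitalCStarAlgebra A]

theorem exists_strict_sum {d : ℕ → 𝓜(ℂ, A)} (hd0 : ∀ k, 0 ≤ d k)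
    (hd1 : ∀ N, ∑ k ∈ Finset.range N, d k ≤ 1) {e : ℕ → A} (he : DenseRange e)
    (hsum : ∀ i, Summable fun k => ‖d k * (e i : 𝓜(ℂ, A))‖) :
    ∃ E : 𝓜(ℂ, A), IsSelfAdjoint E ∧ ∀ a : A, Tendsto
      (fun N => (∑ k ∈ Finset.range N, d k) * (a : 𝓜(ℂ, A))) atTop (𝓝 (E * a)) := by
  have hS0 (N : ℕ) : 0 ≤ ∑ k ∈ Finset.range N, d k := Finset.sum_nonneg fun k _ => hd0 k
  refine exists_isSelfAdjoint_strict_limit (fun N => .of_nonneg (hS0 N))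
    (cauchySeq_mul_coe_of_denseRange
      (fun N => (CStarAlgebra.norm_le_one_iff_of_nonneg _ (hS0 N)).2 (hd1 N)) he fun i => ?_)
  simp only [Finset.sum_mul]
  exact (hsum i).of_norm.hasSum.tendsto_sum_nat.cauchySeq

theorem mul_mem_of_strict_sum {d : ℕ → 𝓜(ℂ, A)} {y E : 𝓜(ℂ, A)}
    (hE : ∀ a : A, Tendsto (fun N => (∑ k ∈ Finset.range N, d k) * (a : 𝓜(ℂ, A))) atTop
      (𝓝 (E * a)))
    (hmem : ∀ k, y * d k ∈ multiplierIdeal A) (hsum : Summable fun k => ‖y * d k‖) :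
    y * E ∈ multiplierIdeal A := by
  refine mem_multiplierIdeal_of_strict_series hmem hsum fun a => ?_
  simp only [← Finset.mul_sum, mul_assoc]
  exact (hE a).const_mul y

theorem one_sub_mul_mem_of_strict_sum {z E : 𝓜(ℂ, A)} (hz : 0 ≤ z) {u : ℕ → 𝓜(ℂ, A)}
    (hu : ∀ k, u k ∈ multiplierIdeal A) (hu1 : ∀ k, ‖u k‖ ≤ 1)
    (hE : ∀ a : A, Tendsto (fun N => (∑ k ∈ Finset.range N,
      cfc (slice k) z * (1 - u k) * cfc (slice k) z) * (a : 𝓜(ℂ, A))) atTop (𝓝 (E * a))) :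
    (1 - E) * z ∈ multiplierIdeal A := by
  refine mem_multiplierIdeal_of_strict_series
    (t := fun k => cfc (slice k) z * u k * (cfc (slice k) z * z))
    (fun k => Ideal.mul_mem_right _ _ (Ideal.mul_mem_left _ _ (hu k))) ?_ fun a => ?_
  · refine .of_nonneg_of_le (fun k => norm_nonneg _) (fun k => ?_)
      ((summable_geometric_of_lt_one (r := 1 / 2) (by norm_num) (by norm_num)).mul_left (1 + ‖z‖))
    calc ‖cfc (slice k) z * u k * (cfc (slice k) z * z)‖
        ≤ 1 * 1 * ((1 + ‖z‖) * (1 / 2) ^ k) :=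
          norm_mul_le_of_le (norm_mul_le_of_le (norm_cfc_slice_le_one k hz) (hu1 k))
            (norm_cfc_slice_mul_self_le k hz)
      _ = (1 + ‖z‖) * (1 / 2) ^ k := by rw [one_mul, one_mul]
  · have hsum (N : ℕ) : ∑ k ∈ Finset.range N, cfc (slice k) z * u k * (cfc (slice k) z * z) =
        cfc (ramp (2 ^ N - 1)) z * z -
          (∑ k ∈ Finset.range N, cfc (slice k) z * (1 - u k) * cfc (slice k) z) * z := by
      rw [← sum_cfc_slice_mul_self N hz, ← sub_mul, ← Finset.sum_sub_distrib, Finset.sum_mul]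
      exact Finset.sum_congr rfl fun k _ => by noncomm_ring
    simp only [hsum, sub_mul, one_mul]
    refine ((tendsto_cfc_ramp_mul_self hz).mul_const _).sub ?_
    simpa only [mul_assoc, mul_coe] using hE (z.fst a)

variable [TopologicalSpace.SeparableSpace A]

theorem exists_isSAWStar_witness (Y : Finset 𝓜(ℂ, A)) {z : 𝓜(ℂ, A)} (hz : 0 ≤ z)
    (hY : ∀ y ∈ Y, y * z ∈ multiplierIdeal A) :
    ∃ E, IsSelfAdjoint E ∧ (∀ y ∈ Y, y * E ∈ multiplierIdeal A) ∧
      (1 - E) * z ∈ multiplierIdeal A := by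
  -- `E` is the strict limit of `∑ φ k * (1 - u k) * φ k`: far out in the approximate unit, `u k`
  -- makes `y * E` a norm convergent series in the ideal, and so is `(1 - E) * z` because the
  -- squares `φ k * φ k` sum to a unit for `z` and `φ k * z` decays geometrically.
  set φ : ℕ → 𝓜(ℂ, A) := fun k => cfc (slice k) z
  have hφsa (k : ℕ) : IsSelfAdjoint (φ k) := cfc_predicate _ _
  have hφ1 (k : ℕ) : ‖φ k‖ ≤ 1 := norm_cfc_slice_le_one k hz
  have hYφ : ∀ y ∈ Y, ∀ k, y * φ k ∈ multiplierIdeal A := fun y hy k =>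
    mul_cfc_mem isClosed_multiplierIdeal (continuous_slice k) (slice_zero_right k)
      (.of_nonneg hz) (hY y hy)
  choose u huJ hu0 hu1 huY hue using exists_mem_norm_le_half_pow isClosed_multiplierIdeal Y
    hφsa hYφ fun i => coe_mem_multiplierIdeal (TopologicalSpace.denseSeq A i)
  have hgeom : Summable fun k : ℕ => (1 / 2 : ℝ) ^ k :=
    summable_geometric_of_lt_one (by norm_num) (by norm_num)
  obtain ⟨E, hEsa, hE⟩ := exists_strict_sum (d := fun k => φ k * (1 - u k) * φ k)
    (fun k => (hφsa k).conjugate_nonneg (sub_nonneg.2 (hu1 k)))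
    (fun N => by
      refine le_trans (Finset.sum_le_sum fun k _ => ?_)
        ((sum_cfc_slice_mul_self N hz).le.trans (cfc_ramp_le_one _ _))
      simpa using (hφsa k).conjugate_le_conjugate (sub_le_self 1 (hu0 k)))
    (TopologicalSpace.denseRange_denseSeq A) fun i => by
      refine .of_norm_bounded_eventually_nat hgeom ?_
      filter_upwards [eventually_ge_atTop i] with k hk
      rw [norm_norm, mul_assoc, mul_assoc, ← mul_assoc (1 - u k)]
      simpa using norm_mul_le_of_le (hφ1 k) (hue k i hk)
  refine ⟨E, hEsa, fun y hy => mul_mem_of_strict_sum hE (fun k => ?_) ?_,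
    one_sub_mul_mem_of_strict_sum hz huJ
      (fun k => (CStarAlgebra.norm_le_one_iff_of_nonneg _ (hu0 k)).2 (hu1 k)) hE⟩
  · rw [← mul_assoc, ← mul_assoc]
    exact Ideal.mul_mem_right _ _ (Ideal.mul_mem_right _ _ (hYφ y hy k))
  · refine .of_nonneg_of_le (fun k => norm_nonneg _) (fun k => ?_) hgeom
    rw [← mul_assoc, ← mul_assoc]
    simpa using norm_mul_le_of_le (huY k y hy) (hφ1 k)

theorem isSAWStar_multiplierIdeal : IsSAWStar (multiplierIdeal A) := by
  intro Y z hY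
  obtain ⟨E, hE, hYE, hEz⟩ := exists_isSAWStar_witness Y (mul_star_self_nonneg z) fun y hy => by
    rw [← mul_assoc]
    exact (multiplierIdeal A).mul_mem_right _ (hY y hy)
  refine ⟨E, hE, hYE, mem_of_mul_star_mem isClosed_multiplierIdeal ?_⟩
  rw [star_mul, ← mul_assoc]
  refine (multiplierIdeal A).mul_mem_right _ ?_
  rwa [mul_assoc]

end SAWStar

section Chain

/-- The continuous step from `0` to `1` over `[2⁻⁽ⁱ⁺¹⁾, 2⁻ⁱ]`, used for approximate spectral
projections: for `i < i'` the function `clamp i'` is `1` wherever `clamp i` is nonzero. -/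
noncomputable def clamp (i : ℕ) (t : ℝ) : ℝ := max 0 (min 1 (2 ^ (i + 1) * t - 1))

theorem continuous_clamp (i : ℕ) : Continuous (clamp i) := by
  unfold clamp; fun_prop

theorem clamp_nonneg (i : ℕ) (t : ℝ) : 0 ≤ clamp i t := le_max_left _ _

theorem clamp_le_one (i : ℕ) (t : ℝ) : clamp i t ≤ 1 := max_le zero_le_one (min_le_left _ _)

theorem clamp_zero (i : ℕ) : clamp i 0 = 0 := by norm_num [clamp]

theorem clamp_eq_one {i : ℕ} {t : ℝ} (h : 2 ≤ 2 ^ (i + 1) * t) : clamp i t = 1 := by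
  rw [clamp, min_eq_left (by linarith), max_eq_right zero_le_one]

theorem clamp_one (i : ℕ) : clamp i 1 = 1 := by
  refine clamp_eq_one ?_
  rw [mul_one]
  exact le_self_pow₀ one_le_two i.succ_ne_zero

theorem clamp_mul_clamp {i i' : ℕ} (h : i < i') (t : ℝ) : clamp i' t * clamp i t = clamp i t := by
  rcases le_or_gt (2 ^ (i + 1) * t - 1) 0 with h0 | h0
  · rw [clamp.eq_def i, max_eq_left ((min_le_right _ _).trans h0), mul_zero]
  · have ht : 0 < t := pos_of_mul_pos_right (by linarith) (by positivity : (0 : ℝ) ≤ 2 ^ (i + 1))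
    have hpow : (2 : ℝ) * (2 ^ (i + 1) * t) ≤ 2 ^ (i' + 1) * t := by
      rw [← mul_assoc, ← pow_succ']
      gcongr
      exacts [one_le_two, h]
    rw [clamp_eq_one (by linarith), one_mul]

variable {M : Type*} [CStarAlgebra M]

theorem isSelfAdjoint_cfc_clamp (i : ℕ) (l : M) : IsSelfAdjoint (cfc (clamp i) l) :=
  cfc_predicate _ _

theorem norm_cfc_clamp_le_one (i : ℕ) (l : M) : ‖cfc (clamp i) l‖ ≤ 1 :=
  norm_cfc_le zero_le_one fun t _ => by
    rw [Real.norm_of_nonneg (clamp_nonneg i t)]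
    exact clamp_le_one i t

theorem cfc_clamp_zero (i : ℕ) : cfc (clamp i) (0 : M) = 0 := by
  rw [cfc_apply_zero, clamp_zero, map_zero]

theorem cfc_clamp_one (i : ℕ) : cfc (clamp i) (1 : M) = 1 := by
  rw [cfc_apply_one, clamp_one, map_one]

theorem cfc_clamp_mul_cfc_clamp (l : M) {i i' : ℕ} (h : i < i') :
    cfc (clamp i') l * cfc (clamp i) l = cfc (clamp i) l := by
  rw [← cfc_mul _ _ l (continuous_clamp i').continuousOn (continuous_clamp i).continuousOn]
  exact cfc_congr fun t _ => clamp_mul_clamp h t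

theorem mul_cfc_clamp_eq {w l : M} (hl : IsSelfAdjoint l) (h : w * l = l) (i : ℕ) :
    w * cfc (clamp i) l = cfc (clamp i) l := by
  have := mul_cfc_mem (J := ⊥) (by simp) (continuous_clamp i) (clamp_zero i) (w := 1 - w) hl
    (by rw [sub_mul, one_mul, h, sub_self]; exact Ideal.zero_mem _)
  rw [Ideal.mem_bot, sub_mul, one_mul, sub_eq_zero] at this
  exact this.symm

variable {J : Ideal M}

/-- A sequence `0 = L 0, L 1, …, L n` of self-adjoint elements, each a local unit for the previous
one, such that modulo `J` the element `x` carries `L (j + 1)` into the part of the algebra where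
`L j` is a unit. It replaces the flag of kernels of the powers of a nilpotent matrix. -/
structure ShiftChain (J : Ideal M) (x : M) (n : ℕ) (L : ℕ → M) : Prop where
  isSelfAdjoint : ∀ j, IsSelfAdjoint (L j)
  bot : L 0 = 0
  absorb : ∀ j < n, cfc (clamp 1) (L (j + 1)) * L j = L j
  shift : ∀ j < n, (1 - L j) * x * L (j + 1) ∈ J

theorem ShiftChain.snoc {x l : M} {m : ℕ} {L : ℕ → M} (hL : ShiftChain J x m L)
    (hl : IsSelfAdjoint l) (habsorb : cfc (clamp 1) l * L m = L m)
    (hshift : (1 - L m) * x * l ∈ J) :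
    ShiftChain J x (m + 1) (Function.update L (m + 1) l) where
  isSelfAdjoint j := by
    by_cases hj : j = m + 1
    · rwa [hj, Function.update_self]
    · rw [Function.update_of_ne hj]
      exact hL.isSelfAdjoint j
  bot := by rw [Function.update_of_ne m.succ_ne_zero.symm, hL.bot]
  absorb j hj := by
    rw [Function.update_of_ne hj.ne]
    rcases Nat.lt_succ_iff_lt_or_eq.1 hj with hj | rfl
    · rw [Function.update_of_ne (by omega)]
      exact hL.absorb j hj
    · rwa [Function.update_self]
  shift j hj := by
    rw [Function.update_of_ne hj.ne]
    rcases Nat.lt_succ_iff_lt_or_eq.1 hj with hj | rfl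
    · rw [Function.update_of_ne (by omega)]
      exact hL.shift j hj
    · rwa [Function.update_self]

variable [J.IsTwoSided]

theorem one_sub_cfc_clamp_mul_mem (hJ : IsClosed (J : Set M)) {x l l' : M}
    (hl : IsSelfAdjoint l) (hl' : IsSelfAdjoint l') (h : (1 - l) * x * l' ∈ J) (i i' : ℕ) :
    (1 - cfc (clamp i) l) * x * cfc (clamp i') l' ∈ J := by
  refine mul_cfc_mem hJ (continuous_clamp i') (clamp_zero i') hl' ?_
  rw [mul_assoc] at h ⊢
  exact one_sub_cfc_mul_mem hJ (continuous_clamp i) (clamp_one i) hl h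

theorem exists_chain_step (hJ : IsClosed (J : Set M)) (hsaw : IsSAWStar J) {x l : M}
    (hl : IsSelfAdjoint l) {j : ℕ} (hpow : x ^ (j + 1) * l ∈ J)
    (hshift : (1 - cfc (clamp 0) l) * x * l ∈ J) :
    ∃ l', IsSelfAdjoint l' ∧ x ^ j * l' ∈ J ∧ (1 - cfc (clamp 0) l') * x * l' ∈ J ∧
      cfc (clamp 1) l * l' = l' ∧ (1 - l') * x * l ∈ J := by
  classical
  set P := cfc (clamp 0) l
  have hP : IsSelfAdjoint P := isSelfAdjoint_cfc_clamp 0 l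
  obtain ⟨E, hE, hYE, hEx⟩ := hsaw {x ^ j, 1 - P} (x * l) (by
    simp only [Finset.mem_insert, Finset.mem_singleton, forall_eq_or_imp, forall_eq]
    rw [← mul_assoc, ← mul_assoc, ← pow_succ]
    exact ⟨hpow, hshift⟩)
  have hpowE : x ^ j * E ∈ J := hYE _ (by simp)
  have hPE : (1 - P) * E ∈ J := hYE _ (by simp)
  have hEP : E * (1 - P) ∈ J := by
    simpa [hE.star_eq, hP.star_eq] using star_mem hJ hPE
  have hdiff : E - P * E * P ∈ J := by
    convert J.add_mem hPE (J.mul_mem_left P hEP) using 1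
    noncomm_ring
  have hl' : IsSelfAdjoint (P * E * P) := by
    simpa [hP.star_eq] using hE.conjugate P
  have habsorb : cfc (clamp 1) l * (P * E * P) = P * E * P := by
    rw [← mul_assoc, ← mul_assoc, cfc_clamp_mul_cfc_clamp l zero_lt_one]
  have hshift' : (1 - P * E * P) * x * l ∈ J := by
    convert J.add_mem hEx (J.mul_mem_right (x * l) hdiff) using 1
    noncomm_ring
  refine ⟨P * E * P, hl', ?_, ?_, habsorb, hshift'⟩
  · convert J.sub_mem hpowE (J.mul_mem_left (x ^ j) hdiff) using 1
    noncomm_ring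
  · have := J.mul_mem_right (P * E * P) (one_sub_cfc_clamp_mul_mem hJ hl' hl hshift' 0 1)
    rwa [mul_assoc _ (cfc (clamp 1) l), habsorb] at this

theorem exists_shiftChain (hJ : IsClosed (J : Set M)) (hsaw : IsSAWStar J) {x l : M}
    (hl : IsSelfAdjoint l) {m : ℕ} (hpow : x ^ (m + 1) * l ∈ J)
    (hshift : (1 - cfc (clamp 0) l) * x * l ∈ J) :
    ∃ L, ShiftChain J x (m + 1) L ∧ L (m + 1) = l := by
  induction m generalizing l with
  | zero =>
    have hzero : ShiftChain J x 0 fun _ => (0 : M) := ⟨fun _ => .zero M, rfl, by simp, by simp⟩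
    exact ⟨_, hzero.snoc hl (by simp) (by simpa using hpow), Function.update_self ..⟩
  | succ m ih =>
    obtain ⟨l', hl', hpow', hshift', habsorb, hll'⟩ := exists_chain_step hJ hsaw hl hpow hshift
    obtain ⟨L, hL, rfl⟩ := ih hl' hpow' hshift'
    exact ⟨_, hL.snoc hl habsorb hll', Function.update_self ..⟩

end Chain

section Flag

variable {M : Type*} [CStarAlgebra M]

/-- Approximate projections `p j i` onto the steps `j = 0, …, n` of a flag which `x` lowers by one
step modulo `J`. For fixed `j` they grow with `i`: each `p j i'` is a unit for every `p k i` with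
`k ≤ j` and `i < i'`. -/
structure ShiftFlag (J : Ideal M) (x : M) (n : ℕ) (p : ℕ → ℕ → M) : Prop where
  isSelfAdjoint : ∀ j i, IsSelfAdjoint (p j i)
  norm_le_one : ∀ j i, ‖p j i‖ ≤ 1
  absorb : ∀ {k j i i'}, k ≤ j → j ≤ n → i < i' → p j i' * p k i = p k i
  top : ∀ i, p n i = 1
  bot : ∀ i, p 0 i = 0
  shift : ∀ j < n, ∀ i i', (1 - p j i) * x * p (j + 1) i' ∈ J

theorem ShiftChain.cfc_clamp_mul_cfc_clamp {J : Ideal M} {x : M} {n : ℕ} {L : ℕ → M}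
    (hL : ShiftChain J x n L) {k j i i' : ℕ} (hkj : k ≤ j) (hj : j ≤ n) (hi : i < i') :
    cfc (clamp i') (L j) * cfc (clamp i) (L k) = cfc (clamp i) (L k) := by
  induction j, hkj using Nat.le_induction generalizing i' with
  | base => exact NilpotentLift.cfc_clamp_mul_cfc_clamp _ hi
  | succ j _ ih =>
    have hLj : cfc (clamp i') (L (j + 1)) * L j = L j := by
      rw [← hL.absorb j hj, ← mul_assoc]
      rcases Nat.lt_or_ge 1 i' with h | h
      · rw [NilpotentLift.cfc_clamp_mul_cfc_clamp _ h]
      · obtain rfl : i' = 1 := by omega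
        rw [mul_assoc, hL.absorb j hj, hL.absorb j hj]
    rw [← ih (by omega) i.lt_succ_self, ← mul_assoc, mul_cfc_clamp_eq (hL.isSelfAdjoint j) hLj]

theorem exists_shiftFlag {J : Ideal M} [J.IsTwoSided] (hJ : IsClosed (J : Set M))
    (hsaw : IsSAWStar J) {x : M} {n : ℕ} (hn : 1 ≤ n) (hx : x ^ n ∈ J) :
    ∃ p, ShiftFlag J x n p := by
  obtain ⟨m, rfl⟩ := Nat.exists_eq_add_of_le' hn
  obtain ⟨L, hL, htop⟩ := exists_shiftChain hJ hsaw (.one M) (by simpa using hx)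
    (by rw [cfc_clamp_one, sub_self, zero_mul, zero_mul]; exact J.zero_mem)
  exact ⟨fun j i => cfc (clamp i) (L j),
    { isSelfAdjoint := fun j i => isSelfAdjoint_cfc_clamp i (L j)
      norm_le_one := fun j i => norm_cfc_clamp_le_one i (L j)
      absorb := hL.cfc_clamp_mul_cfc_clamp
      top := fun i => by rw [htop, cfc_clamp_one]
      bot := fun i => by rw [hL.bot, cfc_clamp_zero]
      shift := fun j hj i i' => one_sub_cfc_clamp_mul_mem hJ (hL.isSelfAdjoint j)
        (hL.isSelfAdjoint (j + 1)) (hL.shift j hj) i i' }⟩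

/-- The part of the flag at level `i` between the steps `k` and `k + 1`. -/
def block (p : ℕ → ℕ → M) (i k : ℕ) : M := p (k + 1) i - p k i

/-- Exact strict upper triangularity with respect to the approximate flag `p`, with `β` measuring
how much room there is between the source `p (j + 1) β` and the target `p j 2`. -/
def IsTriangular (p : ℕ → ℕ → M) (n β : ℕ) (a : M) : Prop :=
  ∀ j < n, p j 2 * (a * p (j + 1) β) = a * p (j + 1) β

namespace ShiftFlag

variable {J : Ideal M} {x : M} {n : ℕ} {p : ℕ → ℕ → M}

theorem pow_eq_zero (hp : ShiftFlag J x n p) {a : M} (h : IsTriangular p n 3 a) : a ^ n = 0 := by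
  have hrange : ∀ k ≤ n, p (n - k) 2 * a ^ k = a ^ k := by
    intro k hk
    induction k with
    | zero => rw [Nat.sub_zero, hp.top, one_mul]
    | succ k ih =>
      have hk' : n - k = n - (k + 1) + 1 := by omega
      have hunit : p (n - k) 3 * a ^ k = a ^ k := by
        rw [← ih (by omega), ← mul_assoc, hp.absorb le_rfl (by omega) (by norm_num)]
      rw [pow_succ', ← hunit, hk', ← mul_assoc, ← mul_assoc, mul_assoc _ a, h _ (by omega),
        mul_assoc]
  have := hrange n le_rfl
  rwa [Nat.sub_self, hp.bot, zero_mul, eq_comm] at this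

theorem isSelfAdjoint_block (hp : ShiftFlag J x n p) (i k : ℕ) : IsSelfAdjoint (block p i k) :=
  (hp.isSelfAdjoint _ _).sub (hp.isSelfAdjoint _ _)

theorem norm_block_le_two (hp : ShiftFlag J x n p) (i k : ℕ) : ‖block p i k‖ ≤ 2 :=
  (norm_sub_le_of_le (hp.norm_le_one _ _) (hp.norm_le_one _ _)).trans one_add_one_eq_two.le

theorem sum_block (hp : ShiftFlag J x n p) (i : ℕ) : ∑ k ∈ Finset.range n, block p i k = 1 := by
  simp only [block, Finset.sum_range_sub (p · i), hp.top, hp.bot, sub_zero]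

theorem block_mul_eq_zero (hp : ShiftFlag J x n p) {i i' j k : ℕ} (hjk : j ≤ k) (hk : k < n)
    (hi : i < i') : block p i' k * p j i = 0 := by
  rw [block, sub_mul, hp.absorb (by omega) hk hi, hp.absorb hjk hk.le hi, sub_self]

theorem mul_block_eq (hp : ShiftFlag J x n p) {i i' j k : ℕ} (hkj : k < j) (hj : j ≤ n)
    (hi : i < i') : p j i' * block p i k = block p i k := by
  rw [block, mul_sub, hp.absorb hkj hj hi, hp.absorb hkj.le hj hi]

theorem mul_block_mem [J.IsTwoSided] (hp : ShiftFlag J x n p) {k : ℕ} (hk : k < n) (i i' : ℕ) :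
    (1 - p k i) * x * block p i' k ∈ J := by
  have := J.mul_mem_right (block p i' k) (hp.shift k hk i (i' + 1))
  rwa [mul_assoc _ (p (k + 1) (i' + 1)), hp.mul_block_eq k.lt_succ_self hk i'.lt_succ_self] at this

theorem exists_isTriangular [J.IsTwoSided] (hp : ShiftFlag J x n p) (β : ℕ) :
    ∃ a, IsTriangular p n β a ∧ a - x ∈ J ∧ ‖a‖ ≤ n * (‖x‖ * 2) := by
  refine ⟨∑ k ∈ Finset.range n, p k 1 * x * block p (β + 1) k, fun j hj => ?_, ?_, ?_⟩
  · rw [Finset.sum_mul, Finset.mul_sum]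
    refine Finset.sum_congr rfl fun k hk => ?_
    rcases Nat.lt_or_ge j k with h | h
    · rw [mul_assoc _ (block _ _ _),
        hp.block_mul_eq_zero h (Finset.mem_range.1 hk) β.lt_succ_self, mul_zero, mul_zero]
    · rw [← mul_assoc, ← mul_assoc, ← mul_assoc, hp.absorb h hj.le (by norm_num)]
  · have hx : x = ∑ k ∈ Finset.range n, x * block p (β + 1) k := by
      rw [← Finset.mul_sum, hp.sum_block, mul_one]
    nth_rewrite 2 [hx]
    rw [← Finset.sum_sub_distrib]
    refine J.sum_mem fun k hk => ?_
    convert J.neg_mem (hp.mul_block_mem (Finset.mem_range.1 hk) 1 (β + 1)) using 1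
    noncomm_ring
  · calc ‖∑ k ∈ Finset.range n, p k 1 * x * block p (β + 1) k‖
        ≤ ∑ _k ∈ Finset.range n, 1 * ‖x‖ * 2 := norm_sum_le_of_le _ fun k _ =>
          norm_mul_le_of_le (norm_mul_le_of_le (hp.norm_le_one k 1) le_rfl)
            (hp.norm_block_le_two (β + 1) k)
      _ = n * (‖x‖ * 2) := by simp

end ShiftFlag

end Flag

section Contractor

/-- The function `max(1, √t)⁻¹`, applied to `star a * a` to cut `a` down to the unit ball. -/
noncomputable def shrink (t : ℝ) : ℝ := (max 1 √t)⁻¹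

theorem one_le_max_one_sqrt (t : ℝ) : 1 ≤ max 1 √t := le_max_left _ _

theorem continuous_shrink : Continuous shrink :=
  Continuous.inv₀ (by fun_prop) fun t => (one_pos.trans_le (one_le_max_one_sqrt t)).ne'

theorem shrink_nonneg (t : ℝ) : 0 ≤ shrink t :=
  inv_nonneg.2 (zero_le_one.trans (one_le_max_one_sqrt t))

theorem shrink_le_one (t : ℝ) : shrink t ≤ 1 := inv_le_one_of_one_le₀ (one_le_max_one_sqrt t)

theorem one_sub_shrink_le {t ε : ℝ} (hε : 0 ≤ ε) (ht : t ≤ (1 + ε) ^ 2) : 1 - shrink t ≤ ε := by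
  have hmax : max 1 √t ≤ 1 + ε := max_le (by linarith) ((Real.sqrt_le_left (by linarith)).2 ht)
  have hinv : (1 + ε)⁻¹ ≤ shrink t := inv_anti₀ (one_pos.trans_le (one_le_max_one_sqrt t)) hmax
  have hε' : 1 - ε ≤ (1 + ε)⁻¹ := by
    rw [inv_eq_one_div, le_div_iff₀ (by linarith)]
    nlinarith
  linarith

theorem shrink_mul_mul_shrink_le_one {t : ℝ} (ht : 0 ≤ t) : shrink t * t * shrink t ≤ 1 := by
  have h : √t * shrink t ≤ 1 := by
    rw [shrink, ← div_eq_mul_inv]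
    exact div_le_one_of_le₀ (le_max_right _ _) (zero_le_one.trans (one_le_max_one_sqrt t))
  calc shrink t * t * shrink t = (√t * shrink t) * (√t * shrink t) := by
        nth_rewrite 2 [← Real.mul_self_sqrt ht]
        ring
    _ ≤ 1 := mul_le_one₀ h (mul_nonneg (Real.sqrt_nonneg t) (shrink_nonneg t)) h

variable {M : Type*} [CStarAlgebra M]

/-- The element `max(1, |a|)⁻¹`, which turns `a` into a contraction `a * contractor a`. -/
noncomputable def contractor (a : M) : M := cfc shrink (star a * a)

theorem isSelfAdjoint_contractor (a : M) : IsSelfAdjoint (contractor a) := cfc_predicate _ _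

theorem norm_contractor_le_one (a : M) : ‖contractor a‖ ≤ 1 :=
  norm_cfc_le zero_le_one fun t _ => by
    rw [Real.norm_of_nonneg (shrink_nonneg t)]
    exact shrink_le_one t

theorem norm_mul_contractor_le_one (a : M) : ‖a * contractor a‖ ≤ 1 := by
  have hcfc : star (a * contractor a) * (a * contractor a) =
      cfc (fun t => shrink t * t * shrink t) (star a * a) := by
    rw [cfc_mul (fun t => shrink t * t) shrink _ (continuous_shrink.mul continuous_id).continuousOn
        continuous_shrink.continuousOn,
      cfc_mul shrink (fun t => t) _ continuous_shrink.continuousOn continuousOn_id,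
      cfc_id' ℝ (star a * a), star_mul, (isSelfAdjoint_contractor a).star_eq]
    simp only [contractor, mul_assoc]
  refine (sq_le_one_iff₀ (norm_nonneg _)).1 ?_
  rw [sq, ← CStarRing.norm_star_mul_self, hcfc]
  refine norm_cfc_le zero_le_one fun t ht => ?_
  have ht0 : 0 ≤ t := spectrum_nonneg_of_nonneg (star_mul_self_nonneg a) ht
  rw [Real.norm_of_nonneg
    (mul_nonneg (mul_nonneg (shrink_nonneg t) ht0) (shrink_nonneg t))]
  exact shrink_mul_mul_shrink_le_one ht0

theorem norm_one_sub_contractor_le {a : M} {ε : ℝ} (hε : 0 ≤ ε) (ha : ‖a‖ ≤ 1 + ε) :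
    ‖1 - contractor a‖ ≤ ε := by
  rw [contractor, ← cfc_one ℝ (star a * a),
    ← cfc_sub 1 shrink _ continuousOn_const continuous_shrink.continuousOn]
  refine norm_cfc_le hε fun t ht => ?_
  rw [Pi.one_apply, Real.norm_of_nonneg (sub_nonneg.2 (shrink_le_one t))]
  refine one_sub_shrink_le hε ((spectrum_subset_Icc _ ht).2.trans ?_)
  rw [CStarRing.norm_star_mul_self, ← sq]
  gcongr

theorem contractor_eq_one {a : M} (ha : ‖a‖ ≤ 1) : contractor a = 1 := by
  have := norm_one_sub_contractor_le le_rfl (ha.trans_eq (add_zero 1).symm)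
  exact (sub_eq_zero.1 (norm_le_zero_iff.1 this)).symm

theorem norm_le_one_of_contractor_eq_one {a : M} (h : contractor a = 1) : ‖a‖ ≤ 1 := by
  simpa [h] using norm_mul_contractor_le_one a

theorem contractor_mul_self_le_one (a : M) : contractor a * contractor a ≤ 1 := by
  rw [contractor, ← cfc_mul _ _ _ continuous_shrink.continuousOn continuous_shrink.continuousOn]
  exact cfc_le_one _ _ fun t _ => mul_le_one₀ (shrink_le_one t) (shrink_nonneg t) (shrink_le_one t)

theorem norm_one_sub_contractor_mul_self_le {a : M} {ε : ℝ} (hε : 0 ≤ ε) (ha : ‖a‖ ≤ 1 + ε) :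
    ‖1 - contractor a * contractor a‖ ≤ 2 * ε := by
  calc ‖1 - contractor a * contractor a‖
      = ‖(1 - contractor a) + (1 - contractor a) * contractor a‖ := by
        congr 1; noncomm_ring
    _ ≤ ε + ε * 1 :=
        norm_add_le_of_le (norm_one_sub_contractor_le hε ha)
          (norm_mul_le_of_le (norm_one_sub_contractor_le hε ha) (norm_contractor_le_one a))
    _ = 2 * ε := by ring

variable {J : Ideal M} [J.IsTwoSided]

theorem contractor_sub_contractor_mem (hJ : IsClosed (J : Set M)) {a b : M} (h : a - b ∈ J) :
    contractor a - contractor b ∈ J := by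
  refine cfc_sub_cfc_mem hJ continuous_shrink (.star_mul_self a) (.star_mul_self b) ?_
  convert J.add_mem (J.mul_mem_left (star a) h) (J.mul_mem_right b (star_mem hJ h)) using 1
  rw [star_sub]
  noncomm_ring

theorem one_sub_contractor_mem (hJ : IsClosed (J : Set M)) {a b : M} (h : a - b ∈ J)
    (hb : ‖b‖ ≤ 1) : 1 - contractor a ∈ J := by
  have := J.neg_mem (contractor_sub_contractor_mem hJ h)
  rwa [contractor_eq_one hb, neg_sub] at this

theorem exists_isSelfAdjoint_norm_mul_le (hJ : IsClosed (J : Set M)) {a b : M} (h : a - b ∈ J)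
    (hb : ‖b‖ ≤ 1) {l ε : ℝ} (hl : 1 ≤ l) (hε : 0 ≤ ε) (ha : ‖a‖ ≤ l * (1 + ε)) :
    ∃ ρ : M, IsSelfAdjoint ρ ∧ ρ * ρ ≤ 1 ∧ 1 - ρ * ρ ∈ J ∧ ‖1 - ρ * ρ‖ ≤ 2 * ε ∧
      ‖a * ρ‖ ≤ l := by
  have hl0 : 0 < l := zero_lt_one.trans_le hl
  have hnorm (y : M) : ‖l⁻¹ • y‖ = l⁻¹ * ‖y‖ := by
    rw [norm_smul, Real.norm_of_nonneg (inv_nonneg.2 hl0.le)]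
  have ha' : ‖l⁻¹ • a‖ ≤ 1 + ε := by rwa [hnorm, inv_mul_le_iff₀ hl0]
  have hb' : ‖l⁻¹ • b‖ ≤ 1 := by rw [hnorm, inv_mul_le_iff₀ hl0, mul_one]; exact hb.trans hl
  have hmem : 1 - contractor (l⁻¹ • a) ∈ J :=
    one_sub_contractor_mem hJ (by rw [← smul_sub]; exact J.smul_of_tower_mem _ h) hb'
  refine ⟨contractor (l⁻¹ • a), isSelfAdjoint_contractor _, contractor_mul_self_le_one _, ?_,
    norm_one_sub_contractor_mul_self_le hε ha', ?_⟩
  · convert J.add_mem hmem (J.mul_mem_right (contractor (l⁻¹ • a)) hmem) using 1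
    noncomm_ring
  · have := norm_mul_contractor_le_one (l⁻¹ • a)
    rwa [smul_mul_assoc, hnorm, inv_mul_le_iff₀ hl0, mul_one] at this

theorem one_sub_contractor_mem_of_infDist_le_one (hJ : IsClosed (J : Set M)) {b : M}
    (hb : Metric.infDist b J ≤ 1) : 1 - contractor b ∈ J := by
  refine hJ.closure_subset (Metric.mem_closure_iff.2 fun ε hε => ?_)
  obtain ⟨j, hj, hbj⟩ := (Metric.infDist_lt_iff ⟨0, J.zero_mem⟩).1
    (hb.trans_lt (lt_add_of_pos_right 1 (half_pos hε)))
  refine ⟨contractor (b - j) - contractor b,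
    contractor_sub_contractor_mem hJ (by simpa using hj), ?_⟩
  rw [dist_eq_norm, sub_sub_sub_cancel_right]
  rw [dist_eq_norm] at hbj
  exact (norm_one_sub_contractor_le (half_pos hε).le hbj.le).trans_lt (half_lt_self hε)

theorem exists_norm_le_one_sub_mem (hJ : IsClosed (J : Set M)) {b : M}
    (hb : Metric.infDist b J ≤ 1) : ∃ x, x - b ∈ J ∧ ‖x‖ ≤ 1 := by
  refine ⟨b * contractor b, ?_, norm_mul_contractor_le_one b⟩
  convert J.neg_mem (J.mul_mem_left b (one_sub_contractor_mem_of_infDist_le_one hJ hb)) using 1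
  noncomm_ring

end Contractor

section Pinching

variable {M : Type*} [CStarAlgebra M]

theorem le_card_nsmul_sum_star_mul_mul {ι : Type*} {s : Finset ι} {f : ι → M}
    (hf : ∑ k ∈ s, f k = 1) {w : M} (hw : 0 ≤ w) :
    w ≤ s.card • ∑ k ∈ s, star (f k) * w * f k := by
  rcases s.eq_empty_or_nonempty with rfl | hs
  · rw [Finset.sum_empty] at hf
    have := subsingleton_of_zero_eq_one hf
    exact (Subsingleton.elim _ _).le
  set c : ℝ := (s.card : ℝ)⁻¹
  have hc : (s.card : ℝ) * c = 1 := mul_inv_cancel₀ (Nat.cast_ne_zero.2 hs.card_ne_zero)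
  have hnonneg : 0 ≤ ∑ k ∈ s, star (f k - c • 1) * w * (f k - c • 1) :=
    Finset.sum_nonneg fun k _ => star_left_conjugate_nonneg hw _
  have hexpand : ∑ k ∈ s, star (f k - c • 1) * w * (f k - c • 1) =
      ∑ k ∈ s, star (f k) * w * f k - c • w := by
    have hterm (k : ι) : star (f k - c • 1) * w * (f k - c • 1) =
        star (f k) * w * f k - c • (star (f k) * w) - c • (w * f k) + c • c • w := by
      simp only [star_sub, star_smul, star_one, star_trivial, sub_mul, mul_sub, smul_mul_assoc,
        mul_smul_comm, smul_sub, one_mul, mul_one]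
      abel
    have hcc : c • c • s.card • w = c • w := by
      rw [← Nat.cast_smul_eq_nsmul ℝ, smul_smul c (s.card : ℝ), mul_comm c, hc, one_smul]
    simp only [hterm, Finset.sum_add_distrib, Finset.sum_sub_distrib, ← Finset.smul_sum,
      ← Finset.sum_mul, ← Finset.mul_sum, ← star_sum, hf, star_one, one_mul, mul_one,
      Finset.sum_const, hcc, sub_add_cancel]
  rw [hexpand, sub_nonneg] at hnonneg
  calc w = s.card • c • w := by rw [← Nat.cast_smul_eq_nsmul ℝ, smul_smul, hc, one_smul]
    _ ≤ _ := nsmul_le_nsmul_right hnonneg _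

theorem norm_mul_le_norm_mul_of_mul_self_le {d e : M} (hd : IsSelfAdjoint d) (he : IsSelfAdjoint e)
    (h : d * d ≤ e * e) (a : M) : ‖a * d‖ ≤ ‖a * e‖ := by
  have hconj {s : M} (hs : IsSelfAdjoint s) : ‖a * s‖ ^ 2 = ‖a * (s * s) * star a‖ := by
    rw [sq, ← CStarRing.norm_self_mul_star, star_mul, hs.star_eq]
    simp only [mul_assoc]
  refine (sq_le_sq₀ (norm_nonneg _) (norm_nonneg _)).1 ?_
  rw [hconj hd, hconj he]
  exact CStarAlgebra.norm_le_norm_of_nonneg_of_le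
    (star_right_conjugate_nonneg hd.mul_self_nonneg a) (star_right_conjugate_le_conjugate h a)

/-- The block diagonal part of `w`, scaled by the number of blocks so as to dominate `w`. -/
noncomputable def pinching (p : ℕ → ℕ → M) (n i : ℕ) (w : M) : M :=
  n • ∑ k ∈ Finset.range n, block p i k * w * block p i k

variable {J : Ideal M} {x : M} {n : ℕ} {p : ℕ → ℕ → M}

namespace ShiftFlag

theorem le_pinching (hp : ShiftFlag J x n p) (i : ℕ) {w : M} (hw : 0 ≤ w) :
    w ≤ pinching p n i w := by
  simpa only [pinching, Finset.card_range, (hp.isSelfAdjoint_block i _).star_eq] using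
    le_card_nsmul_sum_star_mul_mul (hp.sum_block i) hw

theorem norm_pinching_le (hp : ShiftFlag J x n p) (i : ℕ) (w : M) :
    ‖pinching p n i w‖ ≤ 4 * n ^ 2 * ‖w‖ := by
  calc ‖pinching p n i w‖
      ≤ n * ‖∑ k ∈ Finset.range n, block p i k * w * block p i k‖ := norm_nsmul_le
    _ ≤ n * ∑ _k ∈ Finset.range n, 2 * ‖w‖ * 2 := by
        gcongr
        exact norm_sum_le_of_le _ fun k _ => norm_mul_le_of_le
          (norm_mul_le_of_le (hp.norm_block_le_two i k) le_rfl) (hp.norm_block_le_two i k)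
    _ = 4 * n ^ 2 * ‖w‖ := by
        rw [Finset.sum_const, Finset.card_range, nsmul_eq_mul]
        ring

theorem mul_pinching_mul (hp : ShiftFlag J x n p) {j : ℕ} (hj : j < n) (β : ℕ) (w : M) :
    p (j + 1) (β + 2) * (pinching p n (β + 1) w * p (j + 1) β) =
      pinching p n (β + 1) w * p (j + 1) β := by
  rw [pinching, smul_mul_assoc, mul_smul_comm, Finset.sum_mul, Finset.mul_sum]
  congr 1
  refine Finset.sum_congr rfl fun k hk => ?_
  rcases Nat.lt_or_ge j k with h | h
  · rw [mul_assoc, hp.block_mul_eq_zero h (Finset.mem_range.1 hk) β.lt_succ_self, mul_zero,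
      mul_zero]
  · simp only [← mul_assoc]
    rw [hp.mul_block_eq (Nat.lt_succ_of_le h) hj (β + 1).lt_succ_self]

theorem isTriangular_mul_one_sub_pinching (hp : ShiftFlag J x n p) {β : ℕ} {a : M}
    (ha : IsTriangular p n (β + 2) a) (w : M) :
    IsTriangular p n β (a * (1 - pinching p n (β + 1) w)) := by
  intro j hj
  have hunit : (1 - pinching p n (β + 1) w) * p (j + 1) β =
      p (j + 1) (β + 2) * ((1 - pinching p n (β + 1) w) * p (j + 1) β) := by
    rw [sub_mul, one_mul, mul_sub, hp.absorb le_rfl hj (by omega), hp.mul_pinching_mul hj]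
  rw [mul_assoc, hunit, ← mul_assoc a, ← mul_assoc (p j 2), ha j hj]

end ShiftFlag

theorem pinching_mem [J.IsTwoSided] (p : ℕ → ℕ → M) (n i : ℕ) {w : M} (hw : w ∈ J) :
    pinching p n i w ∈ J :=
  nsmul_mem (J.sum_mem fun _ _ => J.mul_mem_right _ (J.mul_mem_left _ hw)) n

variable [J.IsTwoSided]

theorem ShiftFlag.exists_isTriangular_norm_le (hp : ShiftFlag J x n p) (hJ : IsClosed (J : Set M))
    (hn : 1 ≤ n) (hx : ‖x‖ ≤ 1) {β : ℕ} {a : M} (ha : IsTriangular p n (β + 2) a)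
    (hax : a - x ∈ J) {l : ℝ} (hl : 1 ≤ l) (hal : ‖a‖ ≤ l * (1 + 1 / (8 * n ^ 2))) :
    ∃ a', IsTriangular p n β a' ∧ a' - x ∈ J ∧ ‖a'‖ ≤ l := by
  obtain ⟨ρ, hρ, hρ1, hρJ, hρn, haρ⟩ :=
    exists_isSelfAdjoint_norm_mul_le hJ hax hx hl (by positivity) hal
  set w := 1 - ρ * ρ
  set W := pinching p n (β + 1) w
  have hwW : w ≤ W := hp.le_pinching _ (sub_nonneg.2 hρ1)
  have hW0 : 0 ≤ W := (sub_nonneg.2 hρ1).trans hwW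
  have hWnorm : ‖W‖ ≤ 1 := by
    have hn0 : (n : ℝ) ≠ 0 := by positivity
    calc ‖W‖ ≤ 4 * n ^ 2 * (2 * (1 / (8 * n ^ 2))) := (hp.norm_pinching_le _ w).trans (by gcongr)
      _ = 1 := by field_simp; norm_num
  have hW1 : W ≤ 1 := (CStarAlgebra.norm_le_one_iff_of_nonneg W hW0).1 hWnorm
  have hd : 0 ≤ 1 - W := sub_nonneg.2 hW1
  have hsq : (1 - W) * (1 - W) ≤ ρ * ρ := by
    calc (1 - W) * (1 - W) ≤ 1 - W := by
          simpa [sq] using CStarAlgebra.pow_antitone hd (sub_le_self 1 hW0) one_le_two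
      _ ≤ 1 - w := sub_le_sub_left hwW 1
      _ = ρ * ρ := sub_sub_cancel _ _
  refine ⟨a * (1 - W), hp.isTriangular_mul_one_sub_pinching ha w, ?_,
    (norm_mul_le_norm_mul_of_mul_self_le (.of_nonneg hd) hρ hsq a).trans haρ⟩
  convert J.sub_mem hax (J.mul_mem_left a (pinching_mem p n (β + 1) hρJ)) using 1
  noncomm_ring

theorem ShiftFlag.exists_isTriangular_norm_le_one (hp : ShiftFlag J x n p)
    (hJ : IsClosed (J : Set M)) (hn : 1 ≤ n) (hx : ‖x‖ ≤ 1) (β : ℕ) :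
    ∃ a, IsTriangular p n β a ∧ a - x ∈ J ∧ ‖a‖ ≤ 1 := by
  set q : ℝ := 1 + 1 / (8 * n ^ 2)
  have hq : 1 < q := lt_add_of_pos_right 1 (by positivity)
  have descend (S : ℕ) {a : M} (ha : IsTriangular p n (β + 2 * S) a) (hax : a - x ∈ J)
      (han : ‖a‖ ≤ q ^ S) : ∃ a', IsTriangular p n β a' ∧ a' - x ∈ J ∧ ‖a'‖ ≤ 1 := by
    induction S generalizing a with
    | zero => exact ⟨a, ha, hax, by simpa using han⟩
    | succ S ih =>
      obtain ⟨a', ha', hax', han'⟩ := hp.exists_isTriangular_norm_le hJ hn hx ha hax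
        (one_le_pow₀ hq.le) (han.trans_eq (pow_succ q S))
      exact ih ha' hax' han'
  obtain ⟨S, hS⟩ := pow_unbounded_of_one_lt (n * (‖x‖ * 2)) hq
  obtain ⟨a, ha, hax, han⟩ := hp.exists_isTriangular (β + 2 * S)
  exact descend S ha hax (han.trans hS.le)

end Pinching

/-- Every contraction that is nilpotent of order `n` modulo the ideal `J` agrees modulo `J` with
a contraction that is nilpotent of order `n`. -/
def LiftsNilpotentContractions {M : Type*} [CStarAlgebra M] (J : Ideal M) : Prop :=
  ∀ n, 1 ≤ n → ∀ x : M, x ^ n ∈ J → ‖x‖ ≤ 1 → ∃ a, a - x ∈ J ∧ a ^ n = 0 ∧ ‖a‖ ≤ 1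

theorem pow_mem_of_sub_mem {R : Type*} [Ring R] {J : Ideal R} [J.IsTwoSided] {a b : R} {n : ℕ}
    (h : a - b ∈ J) (hb : b ^ n ∈ J) : a ^ n ∈ J := by
  rw [← Ideal.Quotient.eq_zero_iff_mem, map_pow, Ideal.Quotient.eq.2 h, ← map_pow,
    Ideal.Quotient.eq_zero_iff_mem.2 hb]

theorem IsSAWStar.liftsNilpotentContractions {M : Type*} [CStarAlgebra M] {J : Ideal M}
    [J.IsTwoSided] (hsaw : IsSAWStar J) (hJ : IsClosed (J : Set M)) :
    LiftsNilpotentContractions J := by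
  intro n hn x hxn hx
  obtain ⟨p, hp⟩ := exists_shiftFlag hJ hsaw hn hxn
  obtain ⟨a, ha, hax, han⟩ := hp.exists_isTriangular_norm_le_one hJ hn hx 3
  exact ⟨a, hax, hp.pow_eq_zero ha, han⟩

section Transfer

variable {M N : Type*} [CStarAlgebra M] [CStarAlgebra N]

theorem map_contractor (π : M →⋆ₐ[ℂ] N) (a : M) : π (contractor a) = contractor (π a) := by
  have hπ : Continuous π := AddMonoidHomClass.continuous_of_bound π 1
    (by simpa only [one_mul] using NonUnitalStarAlgHom.norm_apply_le π)
  rw [contractor, StarAlgHomClass.map_cfc π shrink _ continuous_shrink.continuousOn hπ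
    (.star_mul_self a) ((IsSelfAdjoint.star_mul_self a).map π), map_mul, map_star, contractor]

theorem LiftsNilpotentContractions.of_starAlgHom {J : Ideal M} [J.IsTwoSided] {K : Ideal N}
    (hK : LiftsNilpotentContractions K) (hJ : IsClosed (J : Set M)) (π : M →⋆ₐ[ℂ] N)
    (hinj : ∀ y ∈ J, π y = 0 → y = 0) (hJK : ∀ y ∈ J, π y ∈ K) (hKJ : ∀ z ∈ K, ∃ y ∈ J, π y = z) :
    LiftsNilpotentContractions J := by
  -- As `π` is injective on `J` only, the norm bound is transported as the equation
  -- `contractor a = 1`, which holds modulo `J` for every lift `a` of `x`.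
  intro n hn x hxn hx
  obtain ⟨c, hcx, hcn, hc⟩ := hK n hn (π x) (map_pow π x n ▸ hJK _ hxn)
    ((NonUnitalStarAlgHom.norm_apply_le π x).trans hx)
  obtain ⟨y, hy, hyc⟩ := hKJ _ hcx
  have hπ : π (x + y) = c := by rw [map_add, hyc, add_sub_cancel]
  have hyx : x + y - x ∈ J := by rwa [add_sub_cancel_left]
  refine ⟨x + y, hyx, hinj _ (pow_mem_of_sub_mem hyx hxn) ?_, norm_le_one_of_contractor_eq_one ?_⟩
  · rw [map_pow, hπ, hcn]
  · have hπc : π (1 - contractor (x + y)) = 0 := by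
      rw [map_sub, map_one, map_contractor, hπ, contractor_eq_one hc, sub_self]
    exact (sub_eq_zero.1 (hinj _ (one_sub_contractor_mem hJ hyx hx) hπc)).symm

end Transfer

section SeparableReduction

open TopologicalSpace

variable {M : Type*} [CStarAlgebra M]

/-- A closed two-sided ideal as a C⋆-algebra in its own right. -/
def idealStarSubalgebra (J : Ideal M) [J.IsTwoSided] (hJ : IsClosed (J : Set M)) :
    NonUnitalStarSubalgebra ℂ M where
  carrier := J
  add_mem' := J.add_mem
  zero_mem' := J.zero_mem
  mul_mem' := fun {a _} _ => J.mul_mem_left a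
  smul_mem' c _ := J.smul_of_tower_mem c
  star_mem' := star_mem hJ

variable {J : Ideal M} [J.IsTwoSided] {hJ : IsClosed (J : Set M)}

instance : IsClosed (idealStarSubalgebra J hJ : Set M) := hJ

/-- The multiplier `(k ↦ m * k, k ↦ k * m)` of a closed two-sided ideal. -/
noncomputable def idealMultiplier (hJ : IsClosed (J : Set M)) (m : M) :
    𝓜(ℂ, idealStarSubalgebra J hJ) where
  fst := LinearMap.mkContinuous
    { toFun := fun k => ⟨m * k, J.mul_mem_left m k.2⟩
      map_add' := fun k l => Subtype.ext (mul_add m (k : M) l)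
      map_smul' := fun c k => Subtype.ext (mul_smul_comm c m (k : M)) }
    ‖m‖ fun k => norm_mul_le m k
  snd := LinearMap.mkContinuous
    { toFun := fun k => ⟨k * m, J.mul_mem_right m k.2⟩
      map_add' := fun k l => Subtype.ext (add_mul (k : M) l m)
      map_smul' := fun c k => Subtype.ext (smul_mul_assoc c (k : M) m) }
    ‖m‖ fun k => (norm_mul_le (k : M) m).trans_eq (mul_comm _ _)
  central k l := Subtype.ext (mul_assoc (k : M) m l)

theorem idealMultiplier_coe (k : idealStarSubalgebra J hJ) : idealMultiplier hJ (k : M) = k :=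
  DoubleCentralizer.ext _ _ _ _ (Prod.ext rfl rfl)

/-- The action of a C⋆-algebra on a closed two-sided ideal by multiplication, as a homomorphism
to the multiplier algebra of the ideal. -/
noncomputable def idealMultiplierHom (hJ : IsClosed (J : Set M)) :
    M →⋆ₐ[ℂ] 𝓜(ℂ, idealStarSubalgebra J hJ) where
  toFun := idealMultiplier hJ
  map_one' := DoubleCentralizer.ext _ _ _ _ <| Prod.ext
    (ContinuousLinearMap.ext fun k => Subtype.ext (one_mul (k : M)))
    (ContinuousLinearMap.ext fun k => Subtype.ext (mul_one (k : M)))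
  map_mul' m m' := DoubleCentralizer.ext _ _ _ _ <| Prod.ext
    (ContinuousLinearMap.ext fun k => Subtype.ext (mul_assoc m m' (k : M)))
    (ContinuousLinearMap.ext fun k => Subtype.ext (mul_assoc (k : M) m m').symm)
  map_zero' := DoubleCentralizer.ext _ _ _ _ <| Prod.ext
    (ContinuousLinearMap.ext fun k => Subtype.ext (zero_mul (k : M)))
    (ContinuousLinearMap.ext fun k => Subtype.ext (mul_zero (k : M)))
  map_add' m m' := DoubleCentralizer.ext _ _ _ _ <| Prod.ext
    (ContinuousLinearMap.ext fun k => Subtype.ext (add_mul m m' (k : M)))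
    (ContinuousLinearMap.ext fun k => Subtype.ext (mul_add (k : M) m m'))
  commutes' c := DoubleCentralizer.ext _ _ _ _ <| Prod.ext
    (ContinuousLinearMap.ext fun k => Subtype.ext (Algebra.smul_def c (k : M)).symm)
    (ContinuousLinearMap.ext fun k => Subtype.ext <|
      (Algebra.commutes c (k : M)).symm.trans (Algebra.smul_def c (k : M)).symm)
  map_star' m := DoubleCentralizer.ext _ _ _ _ <| Prod.ext
    (ContinuousLinearMap.ext fun k => Subtype.ext <| by
      change star m * k = star (star (k : M) * m)
      rw [star_mul, star_star])
    (ContinuousLinearMap.ext fun k => Subtype.ext <| by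
      change k * star m = star (m * star (k : M))
      rw [star_mul, star_star])

theorem liftsNilpotentContractions_of_separableSpace [SeparableSpace M]
    (hJ : IsClosed (J : Set M)) : LiftsNilpotentContractions J := by
  have : SeparableSpace (idealStarSubalgebra J hJ) :=
    (IsSeparable.of_separableSpace (J : Set M)).separableSpace
  have hlift : LiftsNilpotentContractions (multiplierIdeal (idealStarSubalgebra J hJ)) :=
    isSAWStar_multiplierIdeal.liftsNilpotentContractions isClosed_multiplierIdeal
  refine hlift.of_starAlgHom hJ (idealMultiplierHom hJ) (fun y hy h => ?_) (fun y hy => ?_) ?_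
  · have hfst : (idealMultiplier hJ y).fst ⟨star y, star_mem hJ hy⟩ = 0 := by
      rw [show idealMultiplier hJ y = 0 from h]
      rfl
    exact (CStarRing.mul_star_self_eq_zero_iff y).1 (congrArg Subtype.val hfst)
  · exact ⟨⟨y, hy⟩, (idealMultiplier_coe _).symm⟩
  · rintro _ ⟨k, rfl⟩
    exact ⟨k, k.2, idealMultiplier_coe k⟩

theorem separableSpace_elemental (x : M) : SeparableSpace (StarAlgebra.elemental ℂ x) := by
  have hspan : (StarAlgebra.adjoin ℂ ({x} : Set M) : Set M) =
      Submodule.span ℂ (Submonoid.closure ({x} ∪ star {x}) : Set M) :=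
    congrArg SetLike.coe (StarAlgebra.adjoin_eq_span {x})
  have hcount : Countable ({x} ∪ star {x} : Set M) :=
    Set.Countable.to_subtype (by rw [Set.star_singleton]; simp)
  have hsep : IsSeparable (StarAlgebra.adjoin ℂ ({x} : Set M) : Set M) := by
    rw [hspan, Submonoid.closure_eq_mrange]
    exact (Set.countable_range _).isSeparable.span
  exact hsep.closure.separableSpace

theorem liftsNilpotentContractions_of_isClosed (hJ : IsClosed (J : Set M)) :
    LiftsNilpotentContractions J := by
  intro n hn x hxn hx
  have := separableSpace_elemental x
  let ι := (StarAlgebra.elemental ℂ x).subtype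
  have hcl : IsClosed (J.comap ι : Set (StarAlgebra.elemental ℂ x)) :=
    hJ.preimage continuous_subtype_val
  obtain ⟨a, hax, han, ha⟩ := liftsNilpotentContractions_of_separableSpace hcl n hn
    ⟨x, StarAlgebra.elemental.self_mem ℂ x⟩ hxn hx
  exact ⟨a, hax, congrArg Subtype.val han, ha⟩

end SeparableReduction

end NilpotentLift

theorem lift_nilpotent_contraction_multiplier_general {M : Type*} [CStarAlgebra M] (J : Ideal M)
    [J.IsTwoSided] (hJ : IsClosed (J : Set M)) (n : ℕ) (hn : 1 ≤ n) (b : M) (hnil : b ^ n ∈ J)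
    (hnorm : Metric.infDist b (J : Set M) ≤ 1) : ∃ a, a - b ∈ J ∧ a ^ n = 0 ∧ ‖a‖ ≤ 1 := by
  obtain ⟨x, hxb, hx⟩ := NilpotentLift.exists_norm_le_one_sub_mem hJ hnorm
  obtain ⟨a, hax, han, ha⟩ := NilpotentLift.liftsNilpotentContractions_of_isClosed hJ n hn x
    (NilpotentLift.pow_mem_of_sub_mem hxb hnil) hx
  exact ⟨a, by simpa using J.add_mem hax hxb, han, ha⟩

/-- **Lifting of nilpotent contractions from corona algebras.**  Let `I` be a
C*-algebra, `M(I) = 𝓜(ℂ, I)` its multiplier algebra, and `n ≥ 1`.  If `b` in the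
corona algebra `M(I)/I` satisfies `b ^ n = 0` and `‖b‖ ≤ 1`, then `b` lifts to some
`a ∈ M(I)` with `a ^ n = 0` and `‖a‖ ≤ 1`.  Here `I` is identified with its canonical
image in `𝓜(ℂ, I)`, the quotient element is encoded by a representative
`b : 𝓜(ℂ, I)`: the condition `b ^ n = 0` in `M(I)/I` reads `b ^ n ∈ I`, the quotient
norm of `b + I` is `infDist b I`, and `a + I = b + I` reads `a - b ∈ I`. -/
theorem lift_nilpotent_contraction_multiplier
    {I : Type*} [NonUnitalCStarAlgebra I] [StarModule ℂ I]
    (n : ℕ) (hn : 1 ≤ n) (b : 𝓜(ℂ, I))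
    (hnil : b ^ n ∈ Set.range (DoubleCentralizer.coeHom (𝕜 := ℂ) (A := I)))
    (hnorm : Metric.infDist b
      (Set.range (DoubleCentralizer.coeHom (𝕜 := ℂ) (A := I))) ≤ 1) :
    ∃ a : 𝓜(ℂ, I), a - b ∈ Set.range (DoubleCentralizer.coeHom (𝕜 := ℂ) (A := I)) ∧
      a ^ n = 0 ∧ ‖a‖ ≤ 1 := by
  exact lift_nilpotent_contraction_multiplier_general (NilpotentLift.multiplierIdeal I)
    NilpotentLift.isClosed_multiplierIdeal n hn b hnil hnorm
end
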